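/- Let p be a prime, k an algebraically closed field of characteristic p, and let n ≥ 1, ℓ ≥ 1 with d := n − ℓ ≥ 2. Let f_1,…,f_ℓ ∈ k[[x_1,…,x_n]] be a regular sequence with each f_i lying in the square of the maximal ideal (the ideal generated by the variables), and set R := k[[x_1,…,x_n]]/(f_1,…,f_ℓ), with Hilbert–Kunz function HK_e(R) := dim_k k[[x_1,…,x_n]]/((f_1,…,f_ℓ) + (x_1^{p^e},…,x_n^{p^e})). Assume there is no ring isomorphism R ≅ k[[y_0,…,y_d]]/(Q_d). Then there exists F ∈ k[[y_0,…,y_d]] with F ≠ 0 and F in the square of the maximal ideal, such that there is no ring isomorphism k[[y_0,…,y_d]]/(F) ≅ k[[y_0,…,y_d]]/(Q_d), and the liminf as e → ∞ of HK_e(R)/p^{d·e} is at least the limsup as e → ∞ of dim_k( k[[y_0,…,y_d]]/((F) + (y_0^{p^e},…,y_d^{p^e})) )/p^{d·e}. (That is, every singular complete intersection not isomorphic to the A_1 singularity has Hilbert–Kunz multiplicity at least that of some non-A_1 singular hypersurface of the same dimension.) -/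

import Mathlib

/-- The defining equation `Q_d` of the `A₁` singularity:
`Q_d = y_0y_1 + y_2y_3 + ⋯ + y_{d−1}y_d` for `d` odd and
`Q_d = y_0y_1 + ⋯ + y_{d−2}y_{d−1} + y_d²` for `d` even, as a power series. -/
noncomputable def A1ps (k : Type*) [Field k] (d : ℕ) : MvPowerSeries (Fin (d + 1)) k :=
  (∑ i : Fin ((d + 1) / 2),
      (MvPowerSeries.X (⟨2 * i, by omega⟩ : Fin (d + 1)) :
          MvPowerSeries (Fin (d + 1)) k) *
        MvPowerSeries.X (⟨2 * i + 1, by omega⟩ : Fin (d + 1))) +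
    if Even d then
      (MvPowerSeries.X (⟨d, by omega⟩ : Fin (d + 1)) :
        MvPowerSeries (Fin (d + 1)) k) ^ 2
    else 0



section Part0
open MvPowerSeries

/-- Universal property: evaluating at nilpotent elements. -/
theorem ps_exists_hom {k : Type*} [Field k] {n : ℕ} {B : Type*} [CommRing B] [Algebra k B]
    (w : Fin n → B) (hw : ∀ i, IsNilpotent (w i)) :
    ∃ φ : MvPowerSeries (Fin n) k →ₐ[k] B, ∀ i, φ (X i) = w i := by
  letI : UniformSpace k := ⊥
  have : DiscreteUniformity k := ⟨rfl⟩
  letI : UniformSpace B := ⊥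
  have : DiscreteUniformity B := ⟨rfl⟩
  have : IsLinearTopology B B := by infer_instance
  have : ContinuousSMul k B := ⟨continuous_of_discreteTopology⟩
  have hev : HasEval w := by
    refine ⟨fun s => ?_, ?_⟩
    · obtain ⟨N, hN⟩ := hw s
      unfold IsTopologicallyNilpotent
      refine tendsto_const_nhds.congr' ?_
      filter_upwards [Filter.eventually_ge_atTop N] with a ha
      exact (pow_eq_zero_of_le ha hN).symm
    · simp [Filter.cofinite_eq_bot]
  refine ⟨MvPowerSeries.aeval hev, fun i => ?_⟩
  rw [MvPowerSeries.coe_aeval]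
  simp

theorem ps_mem_span_X {k : Type*} [Field k] {n : ℕ} (f : MvPowerSeries (Fin n) k)
    (hf : constantCoeff f = 0) : f ∈ Ideal.span (Set.range (X : Fin n → MvPowerSeries (Fin n) k)) := by
  classical
  let g : Fin n → MvPowerSeries (Fin n) k := fun i m =>
    if ∀ j < i, m j = 0 then coeff (m + Finsupp.single i 1) f else 0
  have hg : f = ∑ i, g i * X i := by
    ext m
    rw [map_sum]
    have h1 : ∀ i, coeff m (g i * X i) =
        if 1 ≤ m i ∧ ∀ j < i, m j = 0 then coeff m f else 0 := by
      intro i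
      rw [X_def, coeff_mul_monomial]
      by_cases hm : 1 ≤ m i
      · have hle : Finsupp.single i 1 ≤ m := by simpa using hm
        rw [if_pos hle, mul_one]
        have : coeff (m - Finsupp.single i 1) (g i) = g i (m - Finsupp.single i 1) := rfl
        rw [this]
        simp only [g, tsub_add_cancel_of_le hle]
        refine if_congr ?_ rfl rfl
        constructor
        · intro h
          refine ⟨hm, fun j hj => ?_⟩
          have := h j hj
          simpa [Finsupp.single_apply, hj.ne'] using this
        · rintro ⟨_, h⟩ j hj
          simp [h j hj]
      · rw [if_neg (by simpa using hm), if_neg (fun h => hm h.1)]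
    simp_rw [h1]
    by_cases hm : m = 0
    · subst hm
      simp only [Finsupp.coe_zero, Pi.zero_apply]
      simpa using hf
    · have hex : ∃ i, 1 ≤ m i := by
        by_contra hcon
        push Not at hcon
        exact hm (Finsupp.ext fun i => by simpa using hcon i)
      obtain ⟨i, hi, hmin⟩ : ∃ i, 1 ≤ m i ∧ ∀ j < i, m j = 0 := by
        let s := Finset.univ.filter (fun i => 1 ≤ m i)
        have hs : s.Nonempty := by obtain ⟨i, hi⟩ := hex; exact ⟨i, by simp [s, hi]⟩
        refine ⟨s.min' hs, ?_, ?_⟩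
        · have := s.min'_mem hs
          simpa [s] using this
        · intro j hj
          by_contra hne
          have : j ∈ s := by simp [s]; omega
          exact absurd (s.min'_le j this) (not_le.mpr hj)
      rw [Finset.sum_eq_single i]
      · rw [if_pos ⟨hi, hmin⟩]
      · rintro j - hji
        rw [if_neg]
        rintro ⟨h1, h2⟩
        rcases lt_or_gt_of_ne hji with h | h
        · have := hmin j h; omega
        · have := h2 i h; omega
      · simp
  rw [hg]
  exact Ideal.sum_mem _ fun i _ => Ideal.mul_mem_left _ _ (Ideal.subset_span ⟨i, rfl⟩)

theorem ps_mem_span_X_iff {k : Type*} [Field k] {n : ℕ} (f : MvPowerSeries (Fin n) k) :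
    f ∈ Ideal.span (Set.range (X : Fin n → MvPowerSeries (Fin n) k)) ↔ constantCoeff f = 0 := by
  refine ⟨fun h => ?_, ps_mem_span_X f⟩
  have : Ideal.span (Set.range (X : Fin n → MvPowerSeries (Fin n) k)) ≤
      RingHom.ker (constantCoeff (σ := Fin n) (R := k)) := by
    rw [Ideal.span_le]
    rintro _ ⟨i, rfl⟩
    simp
  exact this h

theorem ps_exists_poly {k : Type*} [Field k] {n : ℕ} (N : ℕ) (f : MvPowerSeries (Fin n) k) :
    ∃ P ∈ Algebra.adjoin k (Set.range (X : Fin n → MvPowerSeries (Fin n) k)),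
      f - P ∈ (Ideal.span (Set.range (X : Fin n → MvPowerSeries (Fin n) k))) ^ N := by
  classical
  induction N generalizing f with
  | zero => exact ⟨0, Subalgebra.zero_mem _, by simp⟩
  | succ N ih =>
    have h0 : f - C (constantCoeff f) ∈
        Ideal.span (Set.range (X : Fin n → MvPowerSeries (Fin n) k)) :=
      ps_mem_span_X _ (by simp)
    rw [Ideal.mem_span_range_iff_exists_fun] at h0
    obtain ⟨c, hc⟩ := h0
    choose P hP hPm using fun i => ih (c i)
    refine ⟨C (constantCoeff f) + ∑ i, P i * X i, ?_, ?_⟩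
    · refine Subalgebra.add_mem _ (Subalgebra.algebraMap_mem _ (constantCoeff f)) (Subalgebra.sum_mem _ fun i _ => ?_)
      exact Subalgebra.mul_mem _ (hP i) (Algebra.subset_adjoin ⟨i, rfl⟩)
    · rw [← sub_sub, ← hc, ← Finset.sum_sub_distrib]
      refine Ideal.sum_mem _ fun i _ => ?_
      rw [← sub_mul, pow_succ]
      exact Ideal.mul_mem_mul (hPm i) (Ideal.subset_span ⟨i, rfl⟩)

/-- Quotients by ideals containing powers of variables. -/
theorem ps_quot_adjoin {k : Type*} [Field k] {n : ℕ} (J : Ideal (MvPowerSeries (Fin n) k))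
    (hJ : ∀ i : Fin n, ∃ N, (X i : MvPowerSeries (Fin n) k) ^ N ∈ J) :
    Algebra.adjoin k (Set.range (fun i : Fin n => Ideal.Quotient.mk J (X i))) = ⊤ := by
  have hnil : IsNilpotent ((Ideal.span (Set.range (X : Fin n → MvPowerSeries (Fin n) k))).map
      (Ideal.Quotient.mk J)) := by
    rw [Ideal.FG.isNilpotent_iff_le_nilradical]
    · rw [Ideal.map_span, Ideal.span_le]
      rintro _ ⟨_, ⟨i, rfl⟩, rfl⟩
      obtain ⟨N, hN⟩ := hJ i
      refine ⟨N, ?_⟩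
      rw [← map_pow]
      exact Ideal.Quotient.eq_zero_iff_mem.mpr hN
    · exact Ideal.FG.map (Submodule.fg_span (Set.finite_range _)) _
  obtain ⟨N, hN⟩ := hnil
  rw [eq_top_iff]
  rintro a -
  obtain ⟨f, rfl⟩ := Ideal.Quotient.mk_surjective a
  obtain ⟨P, hP, hfP⟩ := ps_exists_poly N f
  have h1 : Ideal.Quotient.mk J f = Ideal.Quotient.mk J P := by
    rw [← sub_eq_zero, ← map_sub]
    have := Ideal.mem_map_of_mem (Ideal.Quotient.mk J) hfP
    rw [Ideal.map_pow, hN] at this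
    exact this
  rw [h1]
  have h2 : (Ideal.Quotient.mkₐ k J) P ∈ (Algebra.adjoin k (Set.range (X : Fin n → MvPowerSeries (Fin n) k))).map (Ideal.Quotient.mkₐ k J) := ⟨P, hP, rfl⟩
  rw [AlgHom.map_adjoin, ← Set.range_comp] at h2
  exact h2

theorem ps_quot_finite {k : Type*} [Field k] {n : ℕ} (J : Ideal (MvPowerSeries (Fin n) k))
    (hJ : ∀ i : Fin n, ∃ N, (X i : MvPowerSeries (Fin n) k) ^ N ∈ J) :
    Module.Finite k (MvPowerSeries (Fin n) k ⧸ J) := by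
  have h := ps_quot_adjoin J hJ
  have h2 := fg_adjoin_of_finite (R := k) (A := MvPowerSeries (Fin n) k ⧸ J)
    (Set.finite_range (fun i : Fin n => Ideal.Quotient.mk J (X i))) (by
      rintro _ ⟨i, rfl⟩
      obtain ⟨N, hN⟩ := hJ i
      refine IsIntegral.of_pow (n := N + 1) (Nat.succ_pos _) ?_
      rw [pow_succ, ← map_pow, Ideal.Quotient.eq_zero_iff_mem.mpr hN, zero_mul]
      exact isIntegral_zero)
  rw [h] at h2
  exact ⟨by simpa using h2⟩

end Part0

section Part1
open MvPowerSeries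

theorem quot_finite_mono {k S : Type*} [Field k] [CommRing S] [Algebra k S] {I J : Ideal S}
    (h : I ≤ J) [Module.Finite k (S ⧸ I)] : Module.Finite k (S ⧸ J) :=
  Module.Finite.of_surjective (Ideal.Quotient.factorₐ k h).toLinearMap
    (Ideal.Quotient.factor_surjective h)

theorem quot_finrank_mono {k S : Type*} [Field k] [CommRing S] [Algebra k S] {I J : Ideal S}
    (h : I ≤ J) [Module.Finite k (S ⧸ I)] :
    Module.finrank k (S ⧸ J) ≤ Module.finrank k (S ⧸ I) :=
  LinearMap.finrank_le_finrank_of_surjective (f := (Ideal.Quotient.factorₐ k h).toLinearMap)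
    (Ideal.Quotient.factor_surjective h)

theorem quot_mul {k S : Type*} [Field k] [CommRing S] [Algebra k S] (I : Ideal S) (a b : S)
    (ha : Module.Finite k (S ⧸ (I ⊔ Ideal.span {a}))) (hb : Module.Finite k (S ⧸ (I ⊔ Ideal.span {b}))) :
    Module.Finite k (S ⧸ (I ⊔ Ideal.span {a * b})) ∧
    Module.finrank k (S ⧸ (I ⊔ Ideal.span {a * b})) ≤
      Module.finrank k (S ⧸ (I ⊔ Ideal.span {a})) + Module.finrank k (S ⧸ (I ⊔ Ideal.span {b})) := by
  set Jab := I ⊔ Ideal.span {a * b} with hJab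
  have hle : Jab ≤ I ⊔ Ideal.span {a} := by
    refine sup_le_sup_left ?_ _
    rw [Ideal.span_singleton_le_span_singleton]
    exact dvd_mul_right a b
  let π : (S ⧸ Jab) →ₗ[k] (S ⧸ (I ⊔ Ideal.span {a})) := (Ideal.Quotient.factorₐ k hle).toLinearMap
  have hπ : Function.Surjective π := Ideal.Quotient.factor_surjective hle
  let g0 : S →ₗ[k] (S ⧸ Jab) := (Ideal.Quotient.mkₐ k Jab).toLinearMap ∘ₗ LinearMap.mulLeft k a
  have hg0 : ((I ⊔ Ideal.span {b}).restrictScalars k) ≤ LinearMap.ker g0 := by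
    intro x hx
    have hx' : x ∈ I ⊔ Ideal.span {b} := hx
    rw [Submodule.mem_sup] at hx'
    obtain ⟨y, hy, z, hz, rfl⟩ := hx'
    obtain ⟨c, rfl⟩ := Ideal.mem_span_singleton'.mp hz
    rw [LinearMap.mem_ker]
    change Ideal.Quotient.mk Jab (a * (y + c * b)) = 0
    rw [Ideal.Quotient.eq_zero_iff_mem]
    have : a * (y + c * b) = a * y + c * (a * b) := by ring
    rw [this]
    exact Ideal.add_mem _ (Ideal.mem_sup_left (Ideal.mul_mem_left _ _ hy))
      (Ideal.mem_sup_right (Ideal.mul_mem_left _ _ (Ideal.mem_span_singleton_self _)))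
  let g : (S ⧸ (I ⊔ Ideal.span {b})) →ₗ[k] (S ⧸ Jab) :=
    Submodule.liftQ ((I ⊔ Ideal.span {b}).restrictScalars k) g0 hg0
  have hker : LinearMap.ker π ≤ LinearMap.range g := by
    intro x hx
    obtain ⟨x, rfl⟩ := Ideal.Quotient.mk_surjective x
    have hx' : x ∈ I ⊔ Ideal.span {a} := Ideal.Quotient.eq_zero_iff_mem.mp hx
    rw [Submodule.mem_sup] at hx'
    obtain ⟨y, hy, z, hz, rfl⟩ := hx'
    obtain ⟨c, rfl⟩ := Ideal.mem_span_singleton'.mp hz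
    refine ⟨Ideal.Quotient.mk _ c, ?_⟩
    change Ideal.Quotient.mk Jab (a * c) = _
    rw [Ideal.Quotient.mk_eq_mk_iff_sub_mem]
    have : a * c - (y + c * a) = - y := by ring
    rw [this]
    exact Ideal.mem_sup_left (neg_mem hy)
  have hfr : Module.Finite k (LinearMap.range g) := inferInstance
  have hfk : Module.Finite k (LinearMap.ker π) :=
    Submodule.finiteDimensional_of_le hker
  have hfin : Module.Finite k (S ⧸ Jab) := by
    have : Module.Finite k ((S ⧸ Jab) ⧸ LinearMap.ker π) :=
      Module.Finite.equiv (LinearMap.quotKerEquivOfSurjective π hπ).symm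
    exact Module.Finite.of_submodule_quotient (LinearMap.ker π)
  refine ⟨hfin, ?_⟩
  have h1 := LinearMap.finrank_range_add_finrank_ker π
  rw [LinearMap.range_eq_top.mpr hπ, finrank_top] at h1
  have h2 := Submodule.finrank_mono hker
  have h3 := LinearMap.finrank_range_le g
  omega

theorem quot_pow {k S : Type*} [Field k] [CommRing S] [Algebra k S] (I : Ideal S) (a : S)
    (ha : Module.Finite k (S ⧸ (I ⊔ Ideal.span {a}))) (m : ℕ) :
    Module.Finite k (S ⧸ (I ⊔ Ideal.span {a ^ m})) ∧
    Module.finrank k (S ⧸ (I ⊔ Ideal.span {a ^ m})) ≤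
      m * Module.finrank k (S ⧸ (I ⊔ Ideal.span {a})) := by
  induction m with
  | zero =>
    have : I ⊔ Ideal.span {a ^ 0} = ⊤ := by simp [Ideal.span_singleton_one]
    rw [this]
    have : Subsingleton (S ⧸ (⊤ : Ideal S)) := Ideal.Quotient.subsingleton_iff.mpr rfl
    exact ⟨inferInstance, by simp [Module.finrank_zero_of_subsingleton]⟩
  | succ m ih =>
    rw [pow_succ]
    obtain ⟨h1, h2⟩ := quot_mul (k := k) I (a ^ m) a ih.1 ha
    refine ⟨h1, h2.trans ?_⟩
    rw [add_mul, one_mul]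
    exact Nat.add_le_add_right ih.2 _

theorem quot_pow_list {k S : Type*} [Field k] [CommRing S] [Algebra k S] (m : ℕ) (L : List S)
    (I : Ideal S)
    (ha : Module.Finite k (S ⧸ (I ⊔ Ideal.span {x | x ∈ L}))) :
    Module.Finite k (S ⧸ (I ⊔ Ideal.span {x | x ∈ L.map (· ^ m)})) ∧
    Module.finrank k (S ⧸ (I ⊔ Ideal.span {x | x ∈ L.map (· ^ m)})) ≤
      m ^ L.length * Module.finrank k (S ⧸ (I ⊔ Ideal.span {x | x ∈ L})) := by
  induction L generalizing I with
  | nil =>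
    refine ⟨ha, ?_⟩
    rw [List.length_nil, pow_zero, one_mul]
    exact le_rfl
  | cons a L ih =>
    have e1 : ∀ (J : Ideal S) (b : S) (M : List S), J ⊔ Ideal.span {x | x ∈ b :: M} =
        (J ⊔ Ideal.span {b}) ⊔ Ideal.span {x | x ∈ M} := by
      intro J b M
      rw [sup_assoc, ← Ideal.span_union]
      congr 2
      ext x; simp
    rw [List.map_cons, e1]
    rw [e1] at ha
    obtain ⟨h1, h2⟩ := ih (I ⊔ Ideal.span {a}) ha
    have e2 : ∀ (c : S) (T : Ideal S), I ⊔ Ideal.span {c} ⊔ T = I ⊔ T ⊔ Ideal.span {c} := by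
      intro c T; rw [sup_right_comm]
    rw [e2] at h1 h2
    obtain ⟨h3, h4⟩ := quot_pow (k := k) _ a h1 m
    rw [e2]
    refine ⟨h3, h4.trans ?_⟩
    rw [e1, List.length_cons, pow_succ, mul_comm (m ^ L.length) m, mul_assoc]
    exact Nat.mul_le_mul_left _ h2

end Part1

section Part2
open MvPowerSeries

/-- the `r`-th coordinate with respect to the basis of monomials over Frobenius. -/
noncomputable def frobCoord {k : Type*} [Field k] (p : ℕ) [ExpChar k p] [PerfectRing k p]
    {n : ℕ} (r : Fin n →₀ ℕ) :
    MvPowerSeries (Fin n) k →+ MvPowerSeries (Fin n) k where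
  toFun g := fun m => (frobeniusEquiv k p).symm (coeff (p • m + r) g)
  map_zero' := by ext m; change (frobeniusEquiv k p).symm _ = _; simp
  map_add' a b := by
    ext m
    change (frobeniusEquiv k p).symm _ = (frobeniusEquiv k p).symm _ + (frobeniusEquiv k p).symm _
    simp

theorem coeff_frobCoord {k : Type*} [Field k] (p : ℕ) [ExpChar k p] [PerfectRing k p]
    {n : ℕ} (r : Fin n →₀ ℕ) (g : MvPowerSeries (Fin n) k) (m : Fin n →₀ ℕ) :
    coeff m (frobCoord p r g) = (frobeniusEquiv k p).symm (coeff (p • m + r) g) := rfl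

theorem coeff_pow_p {k : Type*} [Field k] (p : ℕ) (hp : p ≠ 0) [ExpChar k p]
    {n : ℕ} (a : MvPowerSeries (Fin n) k) (m : Fin n →₀ ℕ) :
    coeff (p • m) (a ^ p) = (coeff m a) ^ p := by
  rw [← map_frobenius_expand p hp, coeff_map, coeff_expand_smul, frobenius_def]

theorem coeff_pow_p_zero {k : Type*} [Field k] (p : ℕ) (hp : p ≠ 0) [ExpChar k p]
    {n : ℕ} (a : MvPowerSeries (Fin n) k) (m : Fin n →₀ ℕ) (i : Fin n) (h : ¬ p ∣ m i) :
    coeff m (a ^ p) = 0 := by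
  rw [← map_frobenius_expand p hp, coeff_map, coeff_expand_of_not_dvd p hp _ h, map_zero]

theorem frobCoord_mul {k : Type*} [Field k] (p : ℕ) (hp : p ≠ 0) [ExpChar k p] [PerfectRing k p]
    {n : ℕ} (r : Fin n →₀ ℕ) (hr : ∀ i, r i < p) (a g : MvPowerSeries (Fin n) k) :
    frobCoord p r (a ^ p * g) = a * frobCoord p r g := by
  classical
  ext m
  rw [coeff_frobCoord, coeff_mul, coeff_mul, map_sum]
  symm
  refine Finset.sum_of_injOn (fun x => (p • x.1, p • x.2 + r)) ?_ ?_ ?_ ?_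
  · rintro ⟨x1, x2⟩ - ⟨y1, y2⟩ - h
    simp only [Prod.mk.injEq] at h
    obtain ⟨h1, h2⟩ := h
    have h2 := add_right_cancel h2
    ext i
    · have := DFunLike.congr_fun h1 i
      simpa [hp] using this
    · have := DFunLike.congr_fun h2 i
      simpa [hp] using this
  · rintro ⟨x1, x2⟩ hx
    have hx' : x1 + x2 = m := Finset.HasAntidiagonal.mem_antidiagonal.mp hx
    refine Finset.mem_coe.mpr (Finset.HasAntidiagonal.mem_antidiagonal.mpr ?_)
    rw [← hx', smul_add, add_assoc]
  · rintro ⟨x1, x2⟩ hx hnot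
    replace hx : x1 + x2 = p • m + r := Finset.HasAntidiagonal.mem_antidiagonal.mp hx
    by_cases hd : ∀ i, p ∣ x1 i
    · exfalso
      apply hnot
      have hxi : ∀ i, x1 i + x2 i = p * m i + r i := fun i => by
        have := DFunLike.congr_fun hx i
        simpa using this
      have hle : ∀ i, x1 i / p ≤ m i := by
        intro i
        have h1 : x1 i < p * (m i + 1) := by
          have := hxi i; have := hr i
          rw [mul_add, mul_one]; omega
        have := Nat.div_lt_of_lt_mul h1
        omega
      have hxm : ∀ i, p * (x1 i / p) = x1 i := fun i => Nat.mul_div_cancel' (hd i)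
      refine ⟨(Finsupp.equivFunOnFinite.symm fun i => x1 i / p,
        Finsupp.equivFunOnFinite.symm fun i => m i - x1 i / p), ?_, ?_⟩
      · refine Finset.mem_coe.mpr (Finset.HasAntidiagonal.mem_antidiagonal.mpr ?_)
        ext i
        simp only [Finsupp.add_apply, Finsupp.equivFunOnFinite_symm_apply_apply]
        have := hle i; omega
      · ext i
        · simp [hxm]
        · simp only [Finsupp.add_apply, Finsupp.smul_apply, smul_eq_mul,
            Finsupp.equivFunOnFinite_symm_apply_apply, Nat.mul_sub, hxm]
          have h1 := hxi i
          have h2 := Nat.mul_le_mul_left p (hle i)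
          rw [hxm] at h2
          omega
    · push Not at hd
      obtain ⟨i, hi⟩ := hd
      rw [coeff_pow_p_zero p hp a _ i hi, zero_mul, map_zero]
  · rintro ⟨x1, x2⟩ hx
    rw [map_mul, coeff_pow_p p hp, coeff_frobCoord]
    congr 1
    exact ((frobeniusEquiv k p).symm_apply_apply _).symm

theorem frobCoord_monomial {k : Type*} [Field k] (p : ℕ) [ExpChar k p] [PerfectRing k p]
    {n : ℕ} (r r' : Fin n →₀ ℕ) (hr : ∀ i, r i < p) (hr' : ∀ i, r' i < p) :
    frobCoord p r (monomial r' (1 : k)) = if r = r' then 1 else 0 := by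
  classical
  ext m
  rw [coeff_frobCoord, coeff_monomial]
  have key : p • m + r = r' ↔ m = 0 ∧ r = r' := by
    constructor
    · intro h
      have hm : m = 0 := by
        ext i
        have := DFunLike.congr_fun h i
        simp only [Finsupp.add_apply, Finsupp.smul_apply, smul_eq_mul] at this
        have h1 := hr' i
        by_contra hne
        have : 1 ≤ m i := Nat.one_le_iff_ne_zero.mpr hne
        nlinarith
      subst hm
      simpa using h
    · rintro ⟨rfl, rfl⟩; simp
  by_cases h : r = r'
  · rw [if_pos h, coeff_one]
    by_cases hm : m = 0
    · rw [if_pos (key.mpr ⟨hm, h⟩), if_pos hm, map_one]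
    · rw [if_neg (fun hh => hm (key.mp hh).1), if_neg hm, map_zero]
  · rw [if_neg h, if_neg (fun hh => h (key.mp hh).2)]
    simp

theorem hk_lower {k : Type*} [Field k] (p : ℕ) (hp : p ≠ 0) [ExpChar k p] [PerfectRing k p]
    {n : ℕ} (F : MvPowerSeries (Fin n) k) (q : ℕ) (hq : q ≠ 0) :
    p ^ n * Module.finrank k (MvPowerSeries (Fin n) k ⧸
        Ideal.span ({F} ∪ Set.range (fun i : Fin n => (X i : MvPowerSeries (Fin n) k) ^ q))) ≤
      Module.finrank k (MvPowerSeries (Fin n) k ⧸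
        Ideal.span ({F ^ p} ∪ Set.range (fun i : Fin n => (X i : MvPowerSeries (Fin n) k) ^ (q * p)))) := by
  classical
  set J := Ideal.span ({F} ∪ Set.range (fun i : Fin n => (X i : MvPowerSeries (Fin n) k) ^ q)) with hJ
  set J' := Ideal.span ({F ^ p} ∪ Set.range (fun i : Fin n => (X i : MvPowerSeries (Fin n) k) ^ (q * p))) with hJ'
  have hfin : Module.Finite k (MvPowerSeries (Fin n) k ⧸ J) :=
    ps_quot_finite J fun i => ⟨q, Ideal.subset_span (Or.inr ⟨i, rfl⟩)⟩
  have hfin' : Module.Finite k (MvPowerSeries (Fin n) k ⧸ J') :=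
    ps_quot_finite J' fun i => ⟨q * p, Ideal.subset_span (Or.inr ⟨i, rfl⟩)⟩
  -- coordinates map J' to J
  have hmap : ∀ r : Fin n →₀ ℕ, (∀ i, r i < p) → ∀ x ∈ J', frobCoord p r x ∈ J := by
    intro r hr x hx
    induction hx using Submodule.span_induction with
    | mem x hx =>
      have : ∃ y ∈ J, x = y ^ p := by
        rcases hx with hx | ⟨i, rfl⟩
        · exact ⟨F, Ideal.subset_span (Or.inl rfl), hx⟩
        · exact ⟨X i ^ q, Ideal.subset_span (Or.inr ⟨i, rfl⟩), by simp only [pow_mul]⟩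
      obtain ⟨y, hy, rfl⟩ := this
      rw [← mul_one (y ^ p), frobCoord_mul p hp r hr]
      exact Ideal.mul_mem_right _ _ hy
    | zero => rw [map_zero]; exact J.zero_mem
    | add x y _ _ h1 h2 => rw [map_add]; exact J.add_mem h1 h2
    | smul a x hx h =>
      -- need a stronger statement
      have : ∀ x ∈ J', ∀ a, frobCoord p r (a * x) ∈ J := by
        intro x hx
        induction hx using Submodule.span_induction with
        | mem x hx =>
          intro a
          have : ∃ y ∈ J, x = y ^ p := by
            rcases hx with hx | ⟨i, rfl⟩
            · exact ⟨F, Ideal.subset_span (Or.inl rfl), hx⟩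
            · exact ⟨X i ^ q, Ideal.subset_span (Or.inr ⟨i, rfl⟩), by simp only [pow_mul]⟩
          obtain ⟨y, hy, rfl⟩ := this
          rw [mul_comm, frobCoord_mul p hp r hr]
          exact Ideal.mul_mem_right _ _ hy
        | zero => intro a; rw [mul_zero, map_zero]; exact J.zero_mem
        | add x y _ _ h1 h2 => intro a; rw [mul_add, map_add]; exact J.add_mem (h1 a) (h2 a)
        | smul b x hx h => intro a; rw [smul_eq_mul, ← mul_assoc]; exact h _
      exact this x hx a
  let b := Module.finBasis k (MvPowerSeries (Fin n) k ⧸ J)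
  choose β hβ using fun i => Ideal.Quotient.mk_surjective (b i)
  let ex : (Fin n → Fin p) → (Fin n →₀ ℕ) := fun r => Finsupp.equivFunOnFinite.symm fun i => (r i : ℕ)
  have hex : ∀ r i, ex r i < p := fun r i => (r i).2
  have hexinj : Function.Injective ex := by
    intro r r' h
    ext i
    have := DFunLike.congr_fun h i
    exact this
  let v : (Fin n → Fin p) × Fin (Module.finrank k (MvPowerSeries (Fin n) k ⧸ J)) →
      (MvPowerSeries (Fin n) k ⧸ J') := fun x => Ideal.Quotient.mk J' (β x.2 ^ p * monomial (ex x.1) 1)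
  have hv : LinearIndependent k v := by
    rw [Fintype.linearIndependent_iff]
    intro c hc
    have h1 : (∑ x, (C ((frobeniusEquiv k p).symm (c x)) * β x.2) ^ p * monomial (ex x.1) (1 : k)) ∈ J' := by
      rw [← Ideal.Quotient.eq_zero_iff_mem, map_sum, ← hc]
      refine Finset.sum_congr rfl fun x _ => ?_
      simp only [v]
      have : c x • (Ideal.Quotient.mk J') (β x.2 ^ p * monomial (ex x.1) 1) =
        (Ideal.Quotient.mk J') (c x • (β x.2 ^ p * monomial (ex x.1) 1)) := rfl
      rw [this, smul_eq_C_mul, mul_pow, ← map_pow, mul_assoc]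
      congr 3
      exact (frobeniusEquiv k p).apply_symm_apply _
    rintro ⟨r, i⟩
    have h2 := hmap (ex r) (hex r) _ h1
    rw [map_sum] at h2
    simp_rw [frobCoord_mul p hp _ (hex r), frobCoord_monomial p _ _ (hex r) (hex _), hexinj.eq_iff] at h2
    rw [Fintype.sum_prod_type, Finset.sum_eq_single r] at h2
    · simp only [if_true, mul_one] at h2
      rw [← Ideal.Quotient.eq_zero_iff_mem, map_sum] at h2
      have h3 : ∑ i, (frobeniusEquiv k p).symm (c (r, i)) • b i = 0 := by
        rw [← h2]
        refine Finset.sum_congr rfl fun i _ => ?_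
        rw [← hβ, ← smul_eq_C_mul]
        rfl
      have h4 := Fintype.linearIndependent_iff.mp b.linearIndependent _ h3 i
      simpa using h4
    · intro r' _ hne
      refine Finset.sum_eq_zero fun i _ => ?_
      rw [if_neg (Ne.symm hne), mul_zero]
    · simp
  have := hv.fintype_card_le_finrank
  simpa using this

theorem hk_mono {k : Type*} [Field k] (p : ℕ) (hp : p ≠ 0) [ExpChar k p] [PerfectRing k p]
    {d : ℕ} (F : MvPowerSeries (Fin (d + 1)) k) (q : ℕ) (hq : q ≠ 0) :
    p ^ d * Module.finrank k (MvPowerSeries (Fin (d + 1)) k ⧸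
        Ideal.span ({F} ∪ Set.range (fun i : Fin (d + 1) => (X i : MvPowerSeries (Fin (d + 1)) k) ^ q))) ≤
      Module.finrank k (MvPowerSeries (Fin (d + 1)) k ⧸
        Ideal.span ({F} ∪ Set.range (fun i : Fin (d + 1) => (X i : MvPowerSeries (Fin (d + 1)) k) ^ (q * p)))) := by
  have h1 := hk_lower p hp F q hq
  have e : ∀ G : MvPowerSeries (Fin (d + 1)) k,
      Ideal.span ({G} ∪ Set.range (fun i : Fin (d + 1) => (X i : MvPowerSeries (Fin (d + 1)) k) ^ (q * p)))
      = Ideal.span (Set.range (fun i : Fin (d + 1) => (X i : MvPowerSeries (Fin (d + 1)) k) ^ (q * p))) ⊔ Ideal.span {G} := by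
    intro G
    rw [Ideal.span_union, sup_comm]
  have h2 := (quot_pow (k := k) (Ideal.span (Set.range (fun i : Fin (d + 1) => (X i : MvPowerSeries (Fin (d + 1)) k) ^ (q * p)))) F
    (ps_quot_finite _ fun i => ⟨q * p, Ideal.mem_sup_left (Ideal.subset_span ⟨i, rfl⟩)⟩) p).2
  rw [← e, ← e] at h2
  have h3 := h1.trans h2
  rw [pow_succ, mul_comm (p ^ d) p, mul_assoc] at h3
  exact Nat.le_of_mul_le_mul_left h3 (Nat.pos_of_ne_zero hp)

end Part2

section Part3
open MvPowerSeries

theorem pow_mem_frob {k : Type*} [Field k] (p : ℕ) [Fact p.Prime] [CharP k p] {n : ℕ}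
    (g : MvPowerSeries (Fin n) k) (hg : g ∈ Ideal.span (Set.range (X : Fin n → MvPowerSeries (Fin n) k)))
    (e : ℕ) :
    g ^ p ^ e ∈ Ideal.span (Set.range (fun i : Fin n => (X i : MvPowerSeries (Fin n) k) ^ p ^ e)) := by
  have : CharP (MvPowerSeries (Fin n) k) p :=
    charP_of_injective_algebraMap (algebraMap k (MvPowerSeries (Fin n) k)).injective p
  have h := Ideal.mem_map_of_mem (iterateFrobenius (MvPowerSeries (Fin n) k) p e) hg
  rw [Ideal.map_span, ← Set.range_comp, iterateFrobenius_def] at h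
  exact h

theorem bounded_hk {k : Type*} [Field k] (p : ℕ) [Fact p.Prime] [CharP k p] {n ℓ : ℕ} (hℓn : ℓ ≤ n)
    (f : Fin ℓ → MvPowerSeries (Fin n) k)
    (hreg : RingTheory.Sequence.IsRegular (MvPowerSeries (Fin n) k) (List.ofFn f)) :
    ∃ C : ℕ, ∀ e : ℕ, Module.finrank k
            (MvPowerSeries (Fin n) k ⧸
              Ideal.span (Set.range f ∪ Set.range
                (fun i : Fin n =>
                  (MvPowerSeries.X i : MvPowerSeries (Fin n) k) ^ p ^ e))) ≤ C * p ^ ((n - ℓ) * e) := by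
  classical
  have hlen := ringKrullDim_add_length_eq_ringKrullDim_of_isRegular _ hreg
  have hI : Ideal.ofList (List.ofFn f) = Ideal.span (Set.range f) := by
    unfold Ideal.ofList
    congr 1
    ext x
    simp [List.mem_ofFn]
  have hne : Ideal.ofList (List.ofFn f) ≠ ⊤ := by
    have := hreg.2
    intro h
    apply this
    rw [h]; simp
  rw [hI] at hlen hne
  set I := Ideal.span (Set.range f) with hIdef
  have hXm : IsLocalRing.maximalIdeal (MvPowerSeries (Fin n) k) =
      Ideal.span (Set.range (X : Fin n → MvPowerSeries (Fin n) k)) := by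
    ext g
    rw [ps_mem_span_X_iff, IsLocalRing.mem_maximalIdeal, mem_nonunits_iff, isUnit_iff_constantCoeff]
    simp
  have hdimS : ringKrullDim (MvPowerSeries (Fin n) k) ≤ n := by
    refine (ringKrullDim_le_spanFinrank_maximalIdeal _).trans ?_
    rw [hXm]
    have h1 := Submodule.spanFinrank_span_le_ncard_of_finite
      (R := MvPowerSeries (Fin n) k) (Set.finite_range (X : Fin n → MvPowerSeries (Fin n) k))
    have h2 : (Set.range (X : Fin n → MvPowerSeries (Fin n) k)).ncard ≤ n := by
      rw [← Set.image_univ]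
      refine (Set.ncard_image_le Set.finite_univ).trans ?_
      simp [Set.ncard_univ]
    exact_mod_cast h1.trans h2
  have hnt : Nontrivial (MvPowerSeries (Fin n) k ⧸ I) := Ideal.Quotient.nontrivial_iff.mpr hne
  have hloc : IsLocalRing (MvPowerSeries (Fin n) k ⧸ I) :=
    IsLocalRing.of_surjective' (Ideal.Quotient.mk I) Ideal.Quotient.mk_surjective
  obtain ⟨s, hs, hcard⟩ := Ideal.exists_finset_card_eq_height_of_isNoetherianRing
    (IsLocalRing.maximalIdeal (MvPowerSeries (Fin n) k ⧸ I))
  have hscard : s.card ≤ n - ℓ := by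
    have h1 := IsLocalRing.maximalIdeal_height_eq_ringKrullDim (R := MvPowerSeries (Fin n) k ⧸ I)
    rw [← hcard] at h1
    rw [← h1] at hlen
    rw [← hlen, List.length_ofFn] at hdimS
    have : s.card + ℓ ≤ n := by exact_mod_cast hdimS
    omega
  have hrad : (Ideal.span (s : Set (MvPowerSeries (Fin n) k ⧸ I))).radical =
      IsLocalRing.maximalIdeal (MvPowerSeries (Fin n) k ⧸ I) := by
    apply le_antisymm
    · exact (Ideal.IsPrime.radical_le_iff hs.1.1).mpr hs.1.2
    · rw [Ideal.radical_eq_sInf]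
      refine le_sInf ?_
      rintro P ⟨hP1, hP2⟩
      exact hs.2 ⟨hP2, hP1⟩ (IsLocalRing.le_maximalIdeal hP2.ne_top)
  have hmkm : ∀ g : MvPowerSeries (Fin n) k, Ideal.Quotient.mk I g ∈ IsLocalRing.maximalIdeal (MvPowerSeries (Fin n) k ⧸ I)
      ↔ g ∈ IsLocalRing.maximalIdeal (MvPowerSeries (Fin n) k) := by
    intro g
    have : IsLocalHom (Ideal.Quotient.mk I) := IsLocalHom.of_surjective _ Ideal.Quotient.mk_surjective
    rw [IsLocalRing.mem_maximalIdeal, IsLocalRing.mem_maximalIdeal, mem_nonunits_iff, mem_nonunits_iff,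
      isUnit_map_iff]
  let out := Function.surjInv (Ideal.Quotient.mk_surjective (I := I))
  have hout : ∀ x, Ideal.Quotient.mk I (out x) = x := Function.surjInv_eq _
  let L := s.toList.map out
  have hmapL : (Ideal.span {x | x ∈ L}).map (Ideal.Quotient.mk I) = Ideal.span (s : Set _) := by
    rw [Ideal.map_span]
    congr 1
    ext x
    simp only [L, List.mem_map, Finset.mem_toList, Set.mem_image, Set.mem_ofPred_eq, Finset.mem_coe]
    constructor
    · rintro ⟨_, ⟨y, hy, rfl⟩, rfl⟩; rwa [hout]
    · intro hx; exact ⟨_, ⟨x, hx, rfl⟩, hout x⟩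
  have hX : ∀ i : Fin n, ∃ N, (X i : MvPowerSeries (Fin n) k) ^ N ∈ I ⊔ Ideal.span {x | x ∈ L} := by
    intro i
    have h1 : Ideal.Quotient.mk I (X i) ∈ (Ideal.span (s : Set (MvPowerSeries (Fin n) k ⧸ I))).radical := by
      rw [hrad, hmkm, hXm]
      exact Ideal.subset_span ⟨i, rfl⟩
    obtain ⟨N, hN⟩ := h1
    refine ⟨N, ?_⟩
    rw [← map_pow, ← hmapL, Ideal.mem_map_iff_of_surjective _ Ideal.Quotient.mk_surjective] at hN
    obtain ⟨y, hy, hyx⟩ := hN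
    have h2 : X i ^ N - y ∈ I := by
      rw [← Ideal.Quotient.eq_zero_iff_mem, map_sub, hyx, sub_self]
    have : (X i : MvPowerSeries (Fin n) k) ^ N = (X i ^ N - y) + y := by ring
    rw [this]
    exact Ideal.add_mem _ (Ideal.mem_sup_left h2) (Ideal.mem_sup_right hy)
  have hfin := ps_quot_finite _ hX
  refine ⟨Module.finrank k (MvPowerSeries (Fin n) k ⧸ (I ⊔ Ideal.span {x | x ∈ L})), fun e => ?_⟩
  obtain ⟨hf1, hb⟩ := quot_pow_list (p ^ e) L I hfin
  have hle : I ⊔ Ideal.span {x | x ∈ L.map (· ^ (p ^ e))} ≤ Ideal.span (Set.range f ∪ Set.range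
                (fun i : Fin n =>
                  (MvPowerSeries.X i : MvPowerSeries (Fin n) k) ^ p ^ e)) := by
    refine sup_le (Ideal.span_mono Set.subset_union_left) ?_
    rw [Ideal.span_le]
    intro x hx
    simp only [Set.mem_ofPred_eq, List.mem_map] at hx
    obtain ⟨g, hg, rfl⟩ := hx
    refine Ideal.span_mono Set.subset_union_right (pow_mem_frob p g ?_ e)
    rw [← hXm, ← hmkm, ← hrad]
    refine Ideal.le_radical ?_
    rw [← hmapL]
    exact Ideal.mem_map_of_mem _ (Ideal.subset_span hg)
  refine (quot_finrank_mono hle).trans (hb.trans ?_)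
  rw [mul_comm]
  refine Nat.mul_le_mul_left _ ?_
  rw [← pow_mul, mul_comm]
  refine Nat.pow_le_pow_right (Fact.out : p.Prime).pos ?_
  refine Nat.mul_le_mul_right _ ?_
  simpa [L] using hscard

end Part3

section Part4
open MvPowerSeries

/-- the hyperbolic quadratic form in the variables `w 0, …, w d`. -/
def Qf {B : Type*} [CommRing B] (d : ℕ) (w : ℕ → B) : B :=
  (∑ i ∈ Finset.range ((d + 1) / 2), w (2 * i) * w (2 * i + 1)) + if Even d then w d ^ 2 else 0

/-- the polarization of `Qf`. -/
def DQ {B : Type*} [CommRing B] (d : ℕ) (w c : ℕ → B) : B :=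
  (∑ i ∈ Finset.range ((d + 1) / 2), (w (2 * i) * c (2 * i + 1) + c (2 * i) * w (2 * i + 1))) +
    if Even d then 2 * w d * c d else 0

/-- the cubic form of `A_2`. -/
def F0 {B : Type*} [CommRing B] (d : ℕ) (w : ℕ → B) : B :=
  Qf (d - 1) (fun i => w (i + 1)) + w 0 ^ 3

theorem Qf_map {B B' : Type*} [CommRing B] [CommRing B'] {T : Type*} [FunLike T B B'] [RingHomClass T B B']
    (φ : T) (d : ℕ) (w : ℕ → B) : φ (Qf d w) = Qf d (fun i => φ (w i)) := by
  unfold Qf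
  simp only [map_add, map_sum, map_mul]
  split_ifs <;> simp

theorem F0_map {B B' : Type*} [CommRing B] [CommRing B'] {T : Type*} [FunLike T B B'] [RingHomClass T B B']
    (φ : T) (d : ℕ) (w : ℕ → B) : φ (F0 d w) = F0 d (fun i => φ (w i)) := by
  unfold F0
  rw [map_add, Qf_map, map_pow]

theorem Qf_congr {B : Type*} [CommRing B] {d : ℕ} {w w' : ℕ → B} (h : ∀ i ≤ d, w i = w' i) :
    Qf d w = Qf d w' := by
  unfold Qf
  congr 1
  · refine Finset.sum_congr rfl fun i hi => ?_
    rw [Finset.mem_range] at hi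
    rw [h _ (by omega), h _ (by omega)]
  · rw [h d le_rfl]

theorem F0_congr {B : Type*} [CommRing B] {d : ℕ} (hd : 1 ≤ d) {w w' : ℕ → B} (h : ∀ i ≤ d, w i = w' i) :
    F0 d w = F0 d w' := by
  unfold F0
  rw [Qf_congr (w := fun i => w (i + 1)) (w' := fun i => w' (i + 1)) (fun i hi => h _ (by omega)), h 0 (by omega)]

theorem Qf_add {B : Type*} [CommRing B] (d : ℕ) (w c : ℕ → B) :
    Qf d (fun i => w i + c i) = Qf d w + DQ d w c + Qf d c := by
  unfold Qf DQ
  have : (∑ i ∈ Finset.range ((d + 1) / 2), (w (2 * i) + c (2 * i)) * (w (2 * i + 1) + c (2 * i + 1)))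
    = (∑ i ∈ Finset.range ((d + 1) / 2), w (2 * i) * w (2 * i + 1)) +
      (∑ i ∈ Finset.range ((d + 1) / 2), (w (2 * i) * c (2 * i + 1) + c (2 * i) * w (2 * i + 1))) +
      (∑ i ∈ Finset.range ((d + 1) / 2), c (2 * i) * c (2 * i + 1)) := by
    rw [← Finset.sum_add_distrib, ← Finset.sum_add_distrib]
    exact Finset.sum_congr rfl fun i _ => by ring
  rw [this]
  split_ifs <;> ring

theorem Qf_smul {B : Type*} [CommRing B] (d : ℕ) (t : B) (c : ℕ → B) :
    Qf d (fun i => t * c i) = t ^ 2 * Qf d c := by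
  unfold Qf
  rw [mul_add, Finset.mul_sum]
  congr 1
  · exact Finset.sum_congr rfl fun i _ => by ring
  · split_ifs <;> ring

theorem DQ_smul {B : Type*} [CommRing B] (d : ℕ) (t : B) (w c : ℕ → B) :
    DQ d w (fun i => t * c i) = t * DQ d w c := by
  unfold DQ
  rw [mul_add, Finset.mul_sum]
  congr 1
  · exact Finset.sum_congr rfl fun i _ => by ring
  · split_ifs <;> ring

theorem Qf_nondeg {k : Type*} [Field k] (d : ℕ) (v : ℕ → k) (h : ∀ c : ℕ → k, DQ d v c = 0)
    (hv : Qf d v = 0) : ∀ i ≤ d, v i = 0 := by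
  classical
  have key : ∀ j < (d + 1) / 2, v (2 * j) = 0 ∧ v (2 * j + 1) = 0 := by
    intro j hj
    constructor
    · have := h (fun i => if i = 2 * j + 1 then 1 else 0)
      unfold DQ at this
      rw [Finset.sum_eq_single j] at this
      · have h0 : (if Even d then 2 * v d * (if d = 2 * j + 1 then (1 : k) else 0) else 0) = 0 := by
          split_ifs with h1 h2
          · rw [Nat.even_iff] at h1; omega
          · simp
          · rfl
        simp only [h0] at this
        simpa using this
      · intro b _ hb
        beta_reduce
        rw [if_neg (by omega), if_neg (by omega)]; simp
      · intro hh; exact absurd (Finset.mem_range.mpr hj) hh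
    · have := h (fun i => if i = 2 * j then 1 else 0)
      unfold DQ at this
      rw [Finset.sum_eq_single j] at this
      · have h0 : (if Even d then 2 * v d * (if d = 2 * j then (1 : k) else 0) else 0) = 0 := by
          split_ifs with h1 h2
          · rw [Nat.even_iff] at h1; omega
          · simp
          · rfl
        simp only [h0] at this
        simpa using this
      · intro b _ hb
        beta_reduce
        rw [if_neg (by omega), if_neg (by omega)]; simp
      · intro hh; exact absurd (Finset.mem_range.mpr hj) hh
  intro i hi
  by_cases hid : i < 2 * ((d + 1) / 2)
  · rcases Nat.even_or_odd' i with ⟨j, rfl | rfl⟩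
    · exact (key j (by omega)).1
    · exact (key j (by omega)).2
  · have hdi : i = d := by omega
    have he : Even d := by rw [Nat.even_iff]; omega
    subst hdi
    unfold Qf at hv
    rw [if_pos he, Finset.sum_eq_zero, zero_add] at hv
    · exact pow_eq_zero_iff (two_ne_zero) |>.mp hv
    · intro j hj
      rw [(key j (Finset.mem_range.mp hj)).1, zero_mul]

/-- extension by zero -/
def extz {B : Type*} [Zero B] {N : ℕ} (u : Fin N → B) : ℕ → B := fun i => if h : i < N then u ⟨i, h⟩ else 0

theorem extz_apply {B : Type*} [Zero B] {N : ℕ} (u : Fin N → B) (i : Fin N) : extz u i = u i := by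
  unfold extz; rw [dif_pos i.2]

theorem ev_const {k : Type*} [Field k] {N : ℕ} {B : Type*} [CommRing B] [Algebra k B] (t : B) (u : Fin N → k)
    (φ : MvPowerSeries (Fin N) k →ₐ[k] B) (hφ : ∀ i, φ (X i) = t * algebraMap k B (u i))
    (a : MvPowerSeries (Fin N) k) : ∃ r, φ a = algebraMap k B (constantCoeff a) + t * r := by
  have h1 : a - algebraMap k _ (constantCoeff a) ∈ Ideal.span (Set.range (X : Fin N → MvPowerSeries (Fin N) k)) := by
    rw [ps_mem_span_X_iff, map_sub]
    have : constantCoeff (algebraMap k (MvPowerSeries (Fin N) k) (constantCoeff a)) = constantCoeff a := by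
      rw [MvPowerSeries.algebraMap_apply]; simp
    rw [this, sub_self]
  have h2 : Ideal.span (Set.range (X : Fin N → MvPowerSeries (Fin N) k)) ≤ (Ideal.span {t}).comap φ := by
    rw [Ideal.span_le]
    rintro _ ⟨i, rfl⟩
    rw [SetLike.mem_coe, Ideal.mem_comap, hφ]
    exact Ideal.mul_mem_right _ _ (Ideal.mem_span_singleton_self t)
  have h3 := h2 h1
  rw [Ideal.mem_comap, Ideal.mem_span_singleton] at h3
  obtain ⟨r, hr⟩ := h3
  refine ⟨r, ?_⟩
  rw [← hr, map_sub, AlgHom.commutes]; ring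

theorem ev_lin {k : Type*} [Field k] {N : ℕ} {B : Type*} [CommRing B] [Algebra k B] (t : B) (u : Fin N → k)
    (φ : MvPowerSeries (Fin N) k →ₐ[k] B) (hφ : ∀ i, φ (X i) = t * algebraMap k B (u i))
    {M : Type*} [Fintype M]
    (a w : M → MvPowerSeries (Fin N) k) (x : M → k) (hw : ∀ i, ∃ r, φ (w i) = t * (algebraMap k B (x i) + t * r)) :
    ∃ r, φ (∑ i, a i * w i) = t * (algebraMap k B (∑ i, constantCoeff (a i) * x i) + t * r) := by
  choose r hr using hw
  choose s hs using fun i => ev_const t u φ hφ (a i)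
  refine ⟨∑ i, (algebraMap k B (constantCoeff (a i)) * r i + s i * algebraMap k B (x i) + t * s i * r i), ?_⟩
  simp only [map_sum, map_mul, hr, hs, Finset.mul_sum, ← Finset.sum_add_distrib]
  exact Finset.sum_congr rfl fun i _ => by ring

theorem exists_dual_numbers.{u} (k : Type u) [Field k] :
    ∃ (B : Type u) (_ : CommRing B) (_ : Algebra k B) (t : B), t ^ 3 = 0 ∧
      ∀ x y : k, t ^ 2 * algebraMap k B x = t ^ 2 * algebraMap k B y → x = y := by
  refine ⟨Polynomial k ⧸ Ideal.span {(Polynomial.X ^ 3 : Polynomial k)}, inferInstance, inferInstance,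
    Ideal.Quotient.mk _ Polynomial.X, ?_, ?_⟩
  · rw [← map_pow, Ideal.Quotient.eq_zero_iff_mem]
    exact Ideal.mem_span_singleton_self _
  · intro x y h
    have e : ∀ x : k, algebraMap k (Polynomial k ⧸ Ideal.span {(Polynomial.X ^ 3 : Polynomial k)}) x =
      Ideal.Quotient.mk _ (Polynomial.C x) := fun x => rfl
    rw [e, e, ← map_pow, ← map_mul, ← map_mul, Ideal.Quotient.eq, Ideal.mem_span_singleton,
      Polynomial.X_pow_dvd_iff] at h
    have := h 2 (by norm_num)
    simpa [sub_eq_zero] using this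

/-- the variables, indexed by naturals -/
noncomputable def XN (k : Type*) [Field k] (N : ℕ) : ℕ → MvPowerSeries (Fin N) k := extz X

theorem A1ps_eq (k : Type*) [Field k] (d : ℕ) : A1ps k d = Qf d (XN k (d + 1)) := by
  unfold A1ps Qf
  rw [Finset.sum_range]
  congr 1
  · refine Finset.sum_congr rfl fun i _ => ?_
    unfold XN extz
    rw [dif_pos (by omega), dif_pos (by omega)]
  · unfold XN extz
    rw [dif_pos (by omega)]

theorem F0_not_A1 {k : Type*} [Field k] (d : ℕ) (hd : 2 ≤ d) :
    ¬ Nonempty ((MvPowerSeries (Fin (d + 1)) k ⧸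
          (Ideal.span {F0 d (XN k (d + 1))} : Ideal (MvPowerSeries (Fin (d + 1)) k))) ≃+*
        (MvPowerSeries (Fin (d + 1)) k ⧸
          (Ideal.span {A1ps k d} : Ideal (MvPowerSeries (Fin (d + 1)) k)))) := by
  rintro ⟨Φ⟩
  set I := (Ideal.span {F0 d (XN k (d + 1))} : Ideal (MvPowerSeries (Fin (d + 1)) k)) with hI
  set J := (Ideal.span {A1ps k d} : Ideal (MvPowerSeries (Fin (d + 1)) k)) with hJ
  have hQm : A1ps k d ∈ Ideal.span (Set.range (X : Fin (d + 1) → MvPowerSeries (Fin (d + 1)) k)) := by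
    rw [ps_mem_span_X_iff, A1ps_eq, Qf_map]
    have : ∀ i, constantCoeff (XN k (d + 1) i) = 0 := by
      intro i; unfold XN extz; split_ifs <;> simp
    simp [this, Qf]
  have hJle : J ≤ Ideal.span (Set.range (X : Fin (d + 1) → MvPowerSeries (Fin (d + 1)) k)) := by
    rw [hJ, Ideal.span_le]; simpa using hQm
  have hFm : F0 d (XN k (d + 1)) ∈ Ideal.span (Set.range (X : Fin (d + 1) → MvPowerSeries (Fin (d + 1)) k)) := by
    rw [ps_mem_span_X_iff, F0_map]
    have : ∀ i, constantCoeff (XN k (d + 1) i) = 0 := by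
      intro i; unfold XN extz; split_ifs <;> simp
    simp [this, Qf, F0]
  have hIle : I ≤ Ideal.span (Set.range (X : Fin (d + 1) → MvPowerSeries (Fin (d + 1)) k)) := by
    rw [hI, Ideal.span_le]; simpa using hFm
  -- units in the quotients
  have hunit : ∀ (K : Ideal (MvPowerSeries (Fin (d + 1)) k)),
      K ≤ Ideal.span (Set.range (X : Fin (d + 1) → MvPowerSeries (Fin (d + 1)) k)) →
      ∀ g, IsUnit (Ideal.Quotient.mk K g) ↔ constantCoeff g ≠ 0 := by
    intro K hK g
    constructor
    · intro h h0
      obtain ⟨y, hy⟩ := h.exists_right_inv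
      obtain ⟨y, rfl⟩ := Ideal.Quotient.mk_surjective y
      rw [← map_mul, ← map_one (Ideal.Quotient.mk K), Ideal.Quotient.eq] at hy
      have := (ps_mem_span_X_iff _).mp (hK hy)
      simp [h0] at this
    · intro h
      exact (isUnit_iff_constantCoeff.mpr (isUnit_iff_ne_zero.mpr h)).map (Ideal.Quotient.mk K)
  choose w hw using fun i : Fin (d + 1) => Ideal.Quotient.mk_surjective (Φ (Ideal.Quotient.mk I (X i)))
  have hwm : ∀ i, constantCoeff (w i) = 0 := by
    intro i
    by_contra h
    have h1 := (hunit J hJle _).mpr h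
    rw [hw] at h1
    have h2 := (MulEquiv.isUnit_map Φ).mp h1
    rw [hunit I hIle] at h2
    simp at h2
  have hrel : F0 d (extz w) ∈ J := by
    rw [← Ideal.Quotient.eq_zero_iff_mem, F0_map]
    have h0 : Φ (Ideal.Quotient.mk I (F0 d (XN k (d + 1)))) = 0 := by
      rw [Ideal.Quotient.eq_zero_iff_mem.mpr (Ideal.mem_span_singleton_self _), map_zero]
    rw [F0_map, F0_map] at h0
    rw [← h0]
    refine F0_congr (by omega) fun i hi => ?_
    unfold XN extz
    rw [dif_pos (by omega), dif_pos (by omega), hw]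
  obtain ⟨h, hh⟩ := Ideal.mem_span_singleton.mp hrel
  have hX : ∀ j : Fin (d + 1), ∃ (b : Fin (d + 1) → MvPowerSeries (Fin (d + 1)) k) (g : MvPowerSeries (Fin (d + 1)) k),
      X j = ∑ i, b i * w i + A1ps k d * g := by
    intro j
    obtain ⟨y, hy⟩ := Ideal.Quotient.mk_surjective (Φ.symm (Ideal.Quotient.mk J (X j)))
    have hy0 : constantCoeff y = 0 := by
      by_contra h
      have h1 := (hunit I hIle _).mpr h
      rw [hy] at h1
      have h2 := (MulEquiv.isUnit_map Φ.symm).mp h1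
      rw [hunit J hJle] at h2
      simp at h2
    have hym := ps_mem_span_X y hy0
    obtain ⟨c, rfl⟩ := (Ideal.mem_span_range_iff_exists_fun).mp hym
    choose b hb using fun i : Fin (d + 1) => Ideal.Quotient.mk_surjective (Φ (Ideal.Quotient.mk I (c i)))
    have h3 : Ideal.Quotient.mk J (X j) = Ideal.Quotient.mk J (∑ i, b i * w i) := by
      have : Φ (Φ.symm (Ideal.Quotient.mk J (X j))) = Ideal.Quotient.mk J (X j) := Φ.apply_symm_apply _
      rw [← this, ← hy]
      simp only [map_sum, map_mul, hb, hw]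
    rw [Ideal.Quotient.eq, Ideal.mem_span_singleton] at h3
    obtain ⟨g, hg⟩ := h3
    exact ⟨b, g, by rw [← hg]; ring⟩
  choose b g hbg using hX
  have hwX : ∀ i, ∃ a : Fin (d + 1) → MvPowerSeries (Fin (d + 1)) k, w i = ∑ j, a j * X j := by
    intro i
    obtain ⟨c, hc⟩ := (Ideal.mem_span_range_iff_exists_fun).mp (ps_mem_span_X _ (hwm i))
    exact ⟨c, hc.symm⟩
  choose a ha using hwX
  let L : (Fin (d + 1) → k) →ₗ[k] (Fin (d + 1) → k) :=
    Matrix.mulVecLin (Matrix.of fun i j => constantCoeff (a i j))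
  have hLdef : ∀ u i, L u i = ∑ j, constantCoeff (a i j) * u j := fun u i => rfl
  let c := constantCoeff h
  obtain ⟨B, _, _, t, ht3, ht2⟩ := exists_dual_numbers k
  have main : ∀ u : Fin (d + 1) → k,
      (Qf (d - 1) (fun i => extz (L u) (i + 1)) = c * Qf d (extz u)) ∧
      (∀ j, u j = ∑ i, constantCoeff (b j i) * L u i) := by
    intro u
    obtain ⟨φ, hφ⟩ := ps_exists_hom (k := k) (fun i => t * algebraMap k B (u i))
      (fun i => ⟨3, by rw [mul_pow, ht3, zero_mul]⟩)
    have hwφ : ∀ i, ∃ r, φ (w i) = t * (algebraMap k B (L u i) + t * r) := by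
      intro i
      rw [ha i]
      refine ev_lin t u φ hφ (a i) X u fun j => ⟨0, ?_⟩
      rw [hφ]; ring
    have hQφ : φ (A1ps k d) = t ^ 2 * algebraMap k B (Qf d (extz u)) := by
      rw [A1ps_eq, Qf_map, Qf_map, ← Qf_smul]
      refine Qf_congr fun i hi => ?_
      unfold XN extz
      rw [dif_pos (by omega), dif_pos (by omega), hφ]
    constructor
    · apply ht2
      have h1 := congrArg φ hh
      choose r hr using hwφ
      obtain ⟨s, hs⟩ := ev_const t u φ hφ h
      rw [map_mul, hQφ, hs, F0_map] at h1
      unfold F0 at h1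
      have e1 : (φ (extz w 0)) ^ 3 = 0 := by
        unfold extz
        rw [dif_pos (by omega), hr, mul_pow, ht3, zero_mul]
      have e2 : Qf (d - 1) (fun i => φ (extz w (i + 1))) =
          Qf (d - 1) (fun i => t * (algebraMap k B (extz (L u) (i + 1)) + t * extz r (i + 1))) := by
        refine Qf_congr fun i hi => ?_
        unfold extz
        rw [dif_pos (by omega), dif_pos (by omega), dif_pos (by omega), hr]
      rw [e1, e2, Qf_smul, Qf_add, DQ_smul, Qf_smul, ← Qf_map (algebraMap k B), add_zero] at h1
      rw [map_mul]
      generalize DQ (B := B) _ _ _ = y1 at h1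
      generalize Qf (d - 1) (fun i => extz r (i + 1)) = y2 at h1
      change _ = t ^ 2 * (algebraMap k B c * _)
      change _ = _ * (algebraMap k B c + _) at h1
      linear_combination h1 - (y1 + t * y2 - algebraMap k B (Qf d (extz u)) * s) * ht3
    · intro j
      apply ht2
      obtain ⟨r, hr⟩ := ev_lin t u φ hφ (b j) w (L u) hwφ
      have h1 := congrArg φ (hbg j)
      rw [map_add, hr, map_mul, hQφ, hφ] at h1
      linear_combination t * h1 + (r + algebraMap k B (Qf d (extz u)) * φ (g j)) * ht3
  have hLinj : Function.Injective L := by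
    rw [injective_iff_map_eq_zero]
    intro u hu
    ext j
    rw [(main u).2 j, hu]; simp
  have hLsurj := LinearMap.injective_iff_surjective.mp hLinj
  obtain ⟨v, hv⟩ := hLsurj (fun i => if (i : ℕ) = 0 then 1 else 0)
  obtain ⟨u, hu⟩ := hLsurj (fun i => if (i : ℕ) = 1 ∨ (i : ℕ) = 2 then 1 else 0)
  have hc : c ≠ 0 := by
    intro hc0
    have h1 := (main u).1
    rw [hc0, zero_mul, hu] at h1
    have h2 : Qf (d - 1) (fun i => extz (fun i : Fin (d + 1) => if (i : ℕ) = 1 ∨ (i : ℕ) = 2 then (1 : k) else 0) (i + 1)) = 1 := by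
      rw [Qf_congr (w' := fun i => if i = 0 ∨ i = 1 then 1 else 0)]
      · unfold Qf
        rw [Finset.sum_eq_single 0]
        · have : (if Even (d - 1) then (if d - 1 = 0 ∨ d - 1 = 1 then (1 : k) else 0) ^ 2 else 0) = 0 := by
            split_ifs with h1 h2
            · rcases h2 with h2 | h2
              · omega
              · rw [h2] at h1; exact absurd h1 (by decide)
            · simp
            · rfl
          rw [this]; simp
        · intro i _ hi
          beta_reduce
          rw [if_neg (by omega)]; simp
        · intro hh; exact absurd (Finset.mem_range.mpr (by omega)) hh
      · intro i hi
        unfold extz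
        rw [dif_pos (by omega)]
        simp
    rw [h2] at h1
    exact one_ne_zero h1
  have hinv : ∀ u, Qf d (extz (u + v)) = Qf d (extz u) := by
    intro u
    apply mul_left_cancel₀ hc
    rw [← (main _).1, ← (main _).1]
    refine Qf_congr fun i hi => ?_
    rw [map_add, hv]
    unfold extz
    rw [dif_pos (by omega), dif_pos (by omega)]
    simp
  have hadd : ∀ u, Qf d (extz (u + v)) = Qf d (extz v) + DQ d (extz v) (extz u) + Qf d (extz u) := by
    intro u
    rw [← Qf_add]
    refine Qf_congr fun i hi => ?_
    unfold extz
    rw [dif_pos (by omega), dif_pos (by omega), dif_pos (by omega), Pi.add_apply, add_comm]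
  have hQv : Qf d (extz v) = 0 := by
    have := hinv 0
    rw [zero_add] at this
    rw [this]
    have : extz (0 : Fin (d + 1) → k) = fun _ => 0 := by
      funext i; unfold extz; split_ifs <;> rfl
    rw [this]; simp [Qf]
  have hD : ∀ c : ℕ → k, DQ d (extz v) c = 0 := by
    intro c
    have h1 := hadd (fun i => c i)
    rw [hinv, hQv] at h1
    have h2 : DQ d (extz v) (extz fun i : Fin (d + 1) => c i) = 0 := by
      linear_combination -h1
    rw [← h2]
    have : ∀ i ≤ d, extz (fun i : Fin (d + 1) => c i) i = c i := by
      intro i hi; unfold extz; rw [dif_pos (by omega)]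
    unfold DQ
    rw [this d le_rfl]
    congr 1
    refine Finset.sum_congr rfl fun i hi => ?_
    rw [Finset.mem_range] at hi
    rw [this _ (by omega), this _ (by omega)]
  have hz := Qf_nondeg d (extz v) hD hQv
  have hv0 : v = 0 := by
    ext i
    rw [← extz_apply v i, hz i (by omega)]; rfl
  rw [hv0, map_zero] at hv
  have := congrFun hv 0
  simp at this

end Part4

section Part5
open MvPowerSeries

theorem exists_isotropic {k : Type*} [Field k] [IsAlgClosed k] {N : ℕ} (β : LinearMap.BilinForm k (Fin (N + 2) → k)) :
    ∃ v, v ≠ 0 ∧ β v v = 0 := by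
  let e0 : Fin (N + 2) → k := Pi.single 0 1
  let e1 : Fin (N + 2) → k := Pi.single 1 1
  have h00 : e0 0 = 1 := by simp [e0]
  have h10 : e0 1 = 0 := by simp [e0]
  have h11 : e1 1 = 1 := by simp [e1]
  by_cases h : β e0 e0 = 0
  · exact ⟨e0, fun hh => by rw [hh] at h00; simp at h00, h⟩
  · obtain ⟨x, hx⟩ := IsAlgClosed.exists_root (Polynomial.C (β e0 e0) * Polynomial.X ^ 2 +
      Polynomial.C (β e0 e1 + β e1 e0) * Polynomial.X + Polynomial.C (β e1 e1))
      (by rw [Polynomial.degree_quadratic h]; decide)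
    refine ⟨x • e0 + e1, ?_, ?_⟩
    · intro hh
      have := congrFun hh 1
      simp [h10, h11] at this
    · simp only [Polynomial.IsRoot.def, Polynomial.eval_add, Polynomial.eval_mul, Polynomial.eval_C,
        Polynomial.eval_pow, Polynomial.eval_X] at hx
      simp only [map_add, map_smul, LinearMap.add_apply, LinearMap.smul_apply, smul_eq_mul]
      linear_combination hx

theorem exists_good_basis {k : Type*} [Field k] [IsAlgClosed k] {N : ℕ} (β : LinearMap.BilinForm k (Fin (N + 2) → k)) :
    ∃ e : Module.Basis (Fin (N + 2)) k (Fin (N + 2) → k), β (e 0) (e 0) = 0 ∧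
      ∀ i, i ≠ Fin.last _ → β (e 0) (e i) + β (e i) (e 0) = 0 := by
  classical
  obtain ⟨v, hv0, hv⟩ := exists_isotropic β
  let b : (Fin (N + 2) → k) →ₗ[k] k := β v + β.flip v
  have hb : ∀ u, b u = β v u + β u v := fun u => rfl
  obtain ⟨i0, hi0⟩ : ∃ i, v i ≠ 0 := by
    by_contra h; push Not at h; exact hv0 (funext h)
  let c : (Fin (N + 2) → k) →ₗ[k] k := (v i0)⁻¹ • LinearMap.proj i0
  have hc : c v = 1 := by simp [c, hi0]
  obtain ⟨b', hb'0, hb'v, hb'⟩ : ∃ b' : (Fin (N + 2) → k) →ₗ[k] k, b' ≠ 0 ∧ b' v = 0 ∧ ∀ u, b' u = 0 → b u = 0 := by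
    by_cases h : b = 0
    · obtain ⟨j, hj⟩ : ∃ j : Fin (N + 2), j ≠ i0 := exists_ne i0
      refine ⟨LinearMap.proj j - v j • c, ?_, ?_, ?_⟩
      · intro hh
        have := LinearMap.congr_fun hh (Pi.single j 1)
        simp [c, hj.symm] at this
      · simp [hc]
      · intro u _; rw [h]; rfl
    · exact ⟨b, h, by rw [hb, hv, add_zero], fun u hu => hu⟩
  obtain ⟨w0, hw0⟩ : ∃ w, b' w ≠ 0 := by
    by_contra h; push Not at h; exact hb'0 (LinearMap.ext h)
  obtain ⟨w, hbw, hcw⟩ : ∃ w, b' w = 1 ∧ c w = 0 := by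
    refine ⟨(b' w0)⁻¹ • (w0 - c w0 • v), ?_, ?_⟩
    · simp [hb'v, hw0]
    · simp [hc]
  let Nn : Submodule k (Fin (N + 2) → k) := LinearMap.ker b' ⊓ LinearMap.ker c
  have hNn : ∀ u, u ∈ Nn ↔ b' u = 0 ∧ c u = 0 := fun u => by simp [Nn]
  obtain ⟨m, ⟨nb⟩⟩ : ∃ m, Nonempty (Module.Basis (Fin m) k Nn) := ⟨_, ⟨Module.finBasis k Nn⟩⟩
  have hcw' : w ∈ LinearMap.ker c := LinearMap.mem_ker.mpr hcw
  let B1 : Module.Basis (Fin (m + 1)) k (LinearMap.ker c) := Module.Basis.mkFinConsOfLE w hcw' nb inf_le_right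
    (by
      intro a x hx h
      have := congrArg b' h
      simpa [hbw, ((hNn x).mp hx).1] using this)
    (by
      intro z hz
      refine ⟨- b' z, (hNn _).mpr ⟨by simp [hbw], ?_⟩⟩
      rw [LinearMap.mem_ker] at hz
      simp [hz, hcw])
  let B2 : Module.Basis (Fin (m + 2)) k (Fin (N + 2) → k) := Module.Basis.mkFinCons v B1
    (by
      intro a x hx h
      have := congrArg c h
      rw [LinearMap.mem_ker] at hx
      simpa [hc, hx] using this)
    (by
      intro z
      refine ⟨- c z, ?_⟩
      simp [hc])
  have hB2v : B2 0 = v := by simp [B2]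
  have hB2 : ∀ i, i ≠ 1 → b' (B2 i) = 0 := by
    intro i hi
    refine Fin.cases ?_ (fun j => ?_) i (motive := fun i => i ≠ 1 → b' (B2 i) = 0) hi
    · intro _; rw [hB2v, hb'v]
    · intro hj
      refine Fin.cases ?_ (fun l => ?_) j (motive := fun j => j.succ ≠ 1 → b' (B2 j.succ) = 0) hj
      · intro h; exact absurd rfl h
      · intro _
        have : B2 l.succ.succ = (nb l : Fin (N + 2) → k) := by
          have h1 : B2 l.succ.succ = (B1 l.succ : Fin (N + 2) → k) := by simp [B2]
          have h2 : B1 l.succ = Submodule.inclusion inf_le_right (nb l) := by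
            simp only [B1]
            rw [Module.Basis.coe_mkFinConsOfLE, Fin.cons_succ]
            rfl
          rw [h1, h2]; rfl
        rw [this]
        exact ((hNn _).mp (nb l).2).1
  have hmN : m = N := by
    have h1 := Module.finrank_eq_card_basis B2
    simp at h1
    omega
  subst hmN
  have key : ∀ i, i ≠ 1 → β v (B2 i) + β (B2 i) v = 0 := fun i hi => by rw [← hb]; exact hb' _ (hB2 i hi)
  refine ⟨B2.reindex (Equiv.swap 1 (Fin.last _)), ?_⟩
  have h0 : B2.reindex (Equiv.swap 1 (Fin.last _)) 0 = v := by
    rw [Module.Basis.reindex_apply, Equiv.symm_swap, Equiv.swap_apply_of_ne_of_ne, hB2v]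
    · exact Fin.zero_ne_one
    · exact (Fin.last_pos).ne
  rw [h0]
  refine ⟨hv, fun i hi => ?_⟩
  rw [Module.Basis.reindex_apply]
  apply key
  intro hh
  rw [Equiv.symm_swap] at hh
  have := congrArg (Equiv.swap 1 (Fin.last (m + 1))) hh
  rw [Equiv.swap_apply_self, Equiv.swap_apply_left] at this
  exact hi this

/-- the ideal of all coordinates -/
def mI {A : Type*} [CommRing A] (n : ℕ) (z : ℕ → A) : Ideal A := Ideal.span (z '' Set.Iio n)
/-- the ideal of the `y` coordinates -/
def yI {A : Type*} [CommRing A] (d : ℕ) (z : ℕ → A) : Ideal A := Ideal.span (z '' Set.Icc 1 d)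
/-- the ideal of the `x` coordinates -/
def xI {A : Type*} [CommRing A] (d n : ℕ) (z : ℕ → A) : Ideal A := Ideal.span (z '' Set.Ioo d n)
/-- the ideal of initial terms -/
def cI {A : Type*} [CommRing A] (d n : ℕ) (z : ℕ → A) : Ideal A :=
  mI n z * xI d n z ⊔ yI d z ^ 2 ⊔ mI n z * Ideal.span {z 0 ^ 2}

theorem mI_eq {A : Type*} [CommRing A] (d n : ℕ) (hdn : d < n) (z : ℕ → A) :
    mI n z = Ideal.span {z 0} ⊔ yI d z ⊔ xI d n z := by
  unfold mI yI xI
  rw [← Ideal.span_union, ← Ideal.span_union, ← Set.image_singleton, ← Set.image_union, ← Set.image_union]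
  congr 2
  ext i
  simp only [Set.mem_Iio, Set.mem_union, Set.mem_singleton_iff, Set.mem_Icc, Set.mem_Ioo]
  omega

theorem cube_le_aux {A : Type*} [CommRing A] (m t y x c : Ideal A) (hme : m = t ⊔ y ⊔ x)
    (hx : m * x ≤ c) (hy : y ^ 2 ≤ c) (hz : m * (t * t) ≤ c) : m ^ 3 ≤ c := by
  have hym : y ≤ m := by rw [hme]; exact le_sup_right.trans le_sup_left
  have hmul : ∀ I J : Ideal A, I * J ≤ J := fun I J => Ideal.mul_le_right
  have e1 : ∀ K : Ideal A, x ≤ K → y ^ 2 ≤ K → t * t ≤ K → t * y ≤ K → m * m ≤ K := by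
    intro K h1 h2 h3 h4
    have : m * m = (t ⊔ y ⊔ x) * (t ⊔ y ⊔ x) := by rw [← hme]
    rw [this]
    simp only [Ideal.sup_mul, Ideal.mul_sup]
    refine sup_le (sup_le (sup_le (sup_le ?_ ?_) ?_) (sup_le (sup_le ?_ ?_) ?_)) (sup_le (sup_le ?_ ?_) ?_)
    all_goals first
      | exact h3
      | exact h4
      | exact (hmul _ _).trans h1
      | (rw [mul_comm]; exact h4)
      | (rw [← sq]; exact h2)
      | (rw [mul_comm]; exact (hmul _ _).trans h1)
  have e2 := e1 (x ⊔ y ^ 2 ⊔ t * t ⊔ t * y) (le_sup_left.trans (le_sup_left.trans le_sup_left))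
    (le_sup_right.trans (le_sup_left.trans le_sup_left)) (le_sup_right.trans le_sup_left) le_sup_right
  have e3 : m ^ 3 = m * (m * m) := by ring
  rw [e3]
  refine (Ideal.mul_mono_right e2).trans ?_
  simp only [Ideal.mul_sup]
  refine sup_le (sup_le (sup_le hx ((hmul _ _).trans hy)) hz) ?_
  have : m * (t * y) = (t ⊔ y ⊔ x) * (t * y) := by rw [← hme]
  rw [this]
  simp only [Ideal.sup_mul]
  refine sup_le (sup_le ?_ ?_) ?_
  · rw [← mul_assoc, mul_comm]
    exact (Ideal.mul_mono_left hym).trans hz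
  · rw [mul_left_comm, ← sq]
    exact (hmul _ _).trans hy
  · rw [mul_comm]
    refine (Ideal.mul_mono_left ?_).trans hx
    exact (hmul _ _).trans hym

theorem mI_cube_le {A : Type*} [CommRing A] (d n : ℕ) (hdn : d < n) (z : ℕ → A) :
    mI n z ^ 3 ≤ cI d n z := by
  refine cube_le_aux _ _ _ _ _ (mI_eq d n hdn z) (le_sup_left.trans le_sup_left)
    (le_sup_right.trans le_sup_left) ?_
  rw [Ideal.span_singleton_mul_span_singleton, ← sq]
  exact le_sup_right

theorem lin_approx {k : Type*} [Field k] {n : ℕ} (x : MvPowerSeries (Fin n) k)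
    (hx : x ∈ Ideal.span (Set.range (X : Fin n → MvPowerSeries (Fin n) k))) :
    ∃ c : Fin n → k, x - ∑ i, c i • (X i : MvPowerSeries (Fin n) k) ∈
      (Ideal.span (Set.range (X : Fin n → MvPowerSeries (Fin n) k))) ^ 2 := by
  obtain ⟨a, rfl⟩ := (Ideal.mem_span_range_iff_exists_fun).mp hx
  refine ⟨fun i => constantCoeff (a i), ?_⟩
  rw [← Finset.sum_sub_distrib]
  refine Ideal.sum_mem _ fun i _ => ?_
  rw [smul_eq_C_mul, ← sub_mul, sq]
  refine Ideal.mul_mem_mul ?_ (Ideal.subset_span ⟨i, rfl⟩)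
  rw [ps_mem_span_X_iff]; simp

theorem quad_approx {k : Type*} [Field k] {n : ℕ} (x : MvPowerSeries (Fin n) k)
    (hx : x ∈ (Ideal.span (Set.range (X : Fin n → MvPowerSeries (Fin n) k))) ^ 2) :
    ∃ α : Matrix (Fin n) (Fin n) k, x - ∑ i, ∑ j, α i j • (X i * X j : MvPowerSeries (Fin n) k) ∈
      (Ideal.span (Set.range (X : Fin n → MvPowerSeries (Fin n) k))) ^ 3 := by
  set m := Ideal.span (Set.range (X : Fin n → MvPowerSeries (Fin n) k)) with hm
  rw [sq] at hx
  induction hx using Submodule.mul_induction_on' with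
  | mem_mul_mem x hx y hy =>
    obtain ⟨a, ha⟩ := lin_approx x hx
    obtain ⟨b, hb⟩ := lin_approx y hy
    refine ⟨Matrix.of fun i j => a i * b j, ?_⟩
    have e : ∑ i, ∑ j, (Matrix.of fun i j => a i * b j) i j • (X i * X j : MvPowerSeries (Fin n) k) =
        (∑ i, a i • (X i : MvPowerSeries (Fin n) k)) * (∑ i, b i • (X i : MvPowerSeries (Fin n) k)) := by
      rw [Finset.sum_mul_sum]
      refine Finset.sum_congr rfl fun i _ => Finset.sum_congr rfl fun j _ => ?_
      rw [smul_mul_smul_comm]; rfl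
    rw [e]
    have hxm : (∑ i, a i • (X i : MvPowerSeries (Fin n) k)) ∈ m := by
      refine Ideal.sum_mem _ fun i _ => ?_
      rw [smul_eq_C_mul]
      exact Ideal.mul_mem_left _ _ (Ideal.subset_span ⟨i, rfl⟩)
    set x' := (∑ i, a i • (X i : MvPowerSeries (Fin n) k))
    set y' := (∑ i, b i • (X i : MvPowerSeries (Fin n) k))
    have : x * y - x' * y' = (x - x') * y + x' * (y - y') := by ring
    rw [this]
    refine Ideal.add_mem _ ?_ ?_
    · rw [pow_succ]; exact Ideal.mul_mem_mul ha hy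
    · rw [pow_succ, mul_comm]; exact Ideal.mul_mem_mul hxm hb
  | add x _ y _ hx hy =>
    obtain ⟨a, ha⟩ := hx
    obtain ⟨b, hb⟩ := hy
    refine ⟨a + b, ?_⟩
    have := Ideal.add_mem _ ha hb
    convert this using 1
    simp only [Matrix.add_apply, add_smul, Finset.sum_add_distrib]
    ring

theorem exists_coords {k : Type*} [Field k] [IsAlgClosed k] {n d : ℕ} (hd : d + 2 ≤ n)
    (g : MvPowerSeries (Fin n) k)
    (hg : g ∈ (Ideal.span (Set.range (X : Fin n → MvPowerSeries (Fin n) k))) ^ 2) :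
    ∃ E G : Matrix (Fin n) (Fin n) k, E * G = 1 ∧
      g ∈ cI d n (extz (fun j => ∑ i, G j i • (X i : MvPowerSeries (Fin n) k))) := by
  obtain ⟨N, rfl⟩ : ∃ N, n = N + 2 := ⟨n - 2, by omega⟩
  obtain ⟨α, hα⟩ := quad_approx g hg
  obtain ⟨e, he0, he⟩ := exists_good_basis (Matrix.toBilin' α)
  let E := (Pi.basisFun k (Fin (N + 2))).toMatrix e
  let G := e.toMatrix (Pi.basisFun k (Fin (N + 2)))
  have hEG : E * G = 1 := Module.Basis.toMatrix_mul_toMatrix_flip _ _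
  refine ⟨E, G, hEG, ?_⟩
  set z : Fin (N + 2) → MvPowerSeries (Fin (N + 2)) k := fun j => ∑ i, G j i • X i with hz
  have hXz : ∀ i, X i = ∑ j, E i j • z j := by
    intro i
    simp only [hz, Finset.smul_sum, smul_smul]
    rw [Finset.sum_comm]
    simp only [← Finset.sum_smul]
    have : ∀ l, ∑ j, E i j * G j l = (1 : Matrix (Fin (N + 2)) (Fin (N + 2)) k) i l := by
      intro l; rw [← hEG]; rfl
    simp only [this, Matrix.one_apply]
    simp
  have hmz : ∀ i : Fin (N + 2), z i ∈ mI (N + 2) (extz z) := by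
    intro i
    rw [← extz_apply z i]
    exact Ideal.subset_span ⟨i, i.2, rfl⟩
  have hm : Ideal.span (Set.range (X : Fin (N + 2) → MvPowerSeries (Fin (N + 2)) k)) ≤ mI (N + 2) (extz z) := by
    rw [Ideal.span_le]
    rintro _ ⟨i, rfl⟩
    rw [SetLike.mem_coe, hXz]
    refine Ideal.sum_mem _ fun j _ => ?_
    rw [smul_eq_C_mul]
    exact Ideal.mul_mem_left _ _ (hmz j)
  have h3 := mI_cube_le d (N + 2) (by omega) (extz z) (Ideal.pow_right_mono hm 3 hα)
  have hq : ∑ i, ∑ j, α i j • (X i * X j : MvPowerSeries (Fin (N + 2)) k) =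
      ∑ a, ∑ b, (Matrix.toBilin' α (e a) (e b)) • (z a * z b) := by
    have hE : ∀ i j, E i j = e j i := fun i j => by simp [E, Module.Basis.toMatrix_apply]
    simp only [Matrix.toBilin'_apply, ← hE, hXz, Finset.sum_mul_sum, Finset.sum_smul, Finset.smul_sum]
    rw [Finset.sum_congr rfl fun i _ => Finset.sum_comm, Finset.sum_comm]
    refine Finset.sum_congr rfl fun a _ => ?_
    rw [Finset.sum_congr rfl fun i _ => Finset.sum_congr rfl fun j _ => rfl]
    rw [Finset.sum_congr rfl fun i _ => Finset.sum_comm, Finset.sum_comm]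
    refine Finset.sum_congr rfl fun b _ => ?_
    refine Finset.sum_congr rfl fun i _ => ?_
    refine Finset.sum_congr rfl fun j _ => ?_
    rw [smul_mul_smul_comm, smul_smul]
    congr 1; ring
  have hxz : ∀ i : Fin (N + 2), d < i → z i ∈ xI d (N + 2) (extz z) := by
    intro i hi
    rw [← extz_apply z i]
    exact Ideal.subset_span ⟨i, ⟨hi, i.2⟩, rfl⟩
  have hyz : ∀ i : Fin (N + 2), 1 ≤ (i : ℕ) → (i : ℕ) ≤ d → z i ∈ yI d (extz z) := by
    intro i hi hi'
    rw [← extz_apply z i]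
    exact Ideal.subset_span ⟨i, ⟨hi, hi'⟩, rfl⟩
  have hmx : mI (N + 2) (extz z) * xI d (N + 2) (extz z) ≤ cI d (N + 2) (extz z) := le_sup_left.trans le_sup_left
  have hsm : ∀ (c : k) x, x ∈ cI d (N + 2) (extz z) → c • x ∈ cI d (N + 2) (extz z) := by
    intro c x hx
    rw [smul_eq_C_mul]; exact Ideal.mul_mem_left _ _ hx
  have h2 : ∑ i, ∑ j, α i j • (X i * X j : MvPowerSeries (Fin (N + 2)) k) ∈ cI d (N + 2) (extz z) := by
    rw [hq]
    simp only [Fin.sum_univ_succ (n := N + 1), he0, zero_smul, zero_add]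
    rw [Finset.sum_add_distrib, ← add_assoc, ← Finset.sum_add_distrib]
    refine Ideal.add_mem _ (Ideal.sum_mem _ fun b _ => ?_) (Ideal.sum_mem _ fun a _ => Ideal.sum_mem _ fun b _ => ?_)
    · rw [mul_comm (z b.succ), ← add_smul]
      by_cases hb : d < (b.succ : ℕ)
      · exact hsm _ _ (hmx (Ideal.mul_mem_mul (hmz 0) (hxz _ hb)))
      · rw [he _ (by
          intro hh
          rw [hh, Fin.val_last] at hb
          omega), zero_smul]
        exact Ideal.zero_mem _
    · apply hsm
      by_cases hb : d < (b.succ : ℕ)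
      · exact (hmx (Ideal.mul_mem_mul (hmz _) (hxz _ hb)))
      · by_cases ha : d < (a.succ : ℕ)
        · rw [mul_comm]
          exact (hmx (Ideal.mul_mem_mul (hmz _) (hxz _ ha)))
        · refine (le_sup_right.trans le_sup_left : yI d (extz z) ^ 2 ≤ cI d (N + 2) (extz z)) ?_
          rw [sq]
          exact Ideal.mul_mem_mul (hyz _ (by simp) (by omega)) (hyz _ (by simp) (by omega))
  have := Ideal.add_mem _ h3 h2
  rwa [sub_add_cancel] at this

end Part5

section Part6
open MvPowerSeries

theorem DQ_add_right {B : Type*} [CommRing B] (d : ℕ) (w c c' : ℕ → B) :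
    DQ d w (fun i => c i + c' i) = DQ d w c + DQ d w c' := by
  unfold DQ
  have : (∑ i ∈ Finset.range ((d + 1) / 2), (w (2 * i) * (c (2 * i + 1) + c' (2 * i + 1)) + (c (2 * i) + c' (2 * i)) * w (2 * i + 1))) =
    (∑ i ∈ Finset.range ((d + 1) / 2), (w (2 * i) * c (2 * i + 1) + c (2 * i) * w (2 * i + 1))) +
    (∑ i ∈ Finset.range ((d + 1) / 2), (w (2 * i) * c' (2 * i + 1) + c' (2 * i) * w (2 * i + 1))) := by
    rw [← Finset.sum_add_distrib]
    exact Finset.sum_congr rfl fun i _ => by ring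
  rw [this]
  split_ifs <;> ring

theorem DQ_comm {B : Type*} [CommRing B] (d : ℕ) (w c : ℕ → B) : DQ d w c = DQ d c w := by
  unfold DQ
  congr 1
  · exact Finset.sum_congr rfl fun i _ => by ring
  · split_ifs <;> ring

theorem DQ_map {B B' : Type*} [CommRing B] [CommRing B'] {T : Type*} [FunLike T B B'] [RingHomClass T B B']
    (φ : T) (d : ℕ) (w c : ℕ → B) : φ (DQ d w c) = DQ d (fun i => φ (w i)) (fun i => φ (c i)) := by
  unfold DQ
  simp only [map_add, map_sum, map_mul]
  split_ifs
  · rw [map_mul, map_mul, map_ofNat]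
  · rw [map_zero]

theorem DQ_mem {B : Type*} [CommRing B] (I c : Ideal B) (hI : I * I ≤ c) (d : ℕ) (w v : ℕ → B)
    (hw : ∀ i, w i ∈ I) (hv : ∀ i, v i ∈ I) : DQ d w v ∈ c := by
  apply hI
  unfold DQ
  refine Ideal.add_mem _ (Ideal.sum_mem _ fun i _ => Ideal.add_mem _ (Ideal.mul_mem_mul (hw _) (hv _)) (Ideal.mul_mem_mul (hv _) (hw _))) ?_
  split_ifs
  · exact Ideal.mul_mem_mul (Ideal.mul_mem_left _ _ (hw _)) (hv _)
  · exact Ideal.zero_mem _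

theorem Qf_mem {B : Type*} [CommRing B] (I c : Ideal B) (hI : I * I ≤ c) (d : ℕ) (w : ℕ → B)
    (hw : ∀ i ≤ d, w i ∈ I) : Qf d w ∈ c := by
  apply hI
  unfold Qf
  refine Ideal.add_mem _ (Ideal.sum_mem _ fun i hi => ?_) ?_
  · rw [Finset.mem_range] at hi
    exact Ideal.mul_mem_mul (hw _ (by omega)) (hw _ (by omega))
  split_ifs
  · rw [sq]; exact Ideal.mul_mem_mul (hw _ le_rfl) (hw _ le_rfl)
  · exact Ideal.zero_mem _

/-- derivative of `F0` -/
def LF {B : Type*} [CommRing B] (d : ℕ) (w c : ℕ → B) : B :=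
  3 * w 0 ^ 2 * c 0 + DQ (d - 1) (fun i => w (i + 1)) (fun i => c (i + 1))

/-- second order term of `F0` -/
def HF {B : Type*} [CommRing B] (d : ℕ) (w c : ℕ → B) : B :=
  3 * w 0 * c 0 ^ 2 + Qf (d - 1) (fun i => c (i + 1))

theorem F0_add {B : Type*} [CommRing B] (d : ℕ) (w c : ℕ → B) (t : B) :
    F0 d (fun i => w i + t * c i) = F0 d w + t * LF d w c + t ^ 2 * HF d w c + t ^ 3 * c 0 ^ 3 := by
  unfold F0 LF HF
  rw [Qf_add (d - 1) (fun i => w (i + 1)) (fun i => t * c (i + 1)), Qf_smul (d - 1) t (fun i => c (i + 1)),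
    DQ_smul (d - 1) t _ (fun i => c (i + 1))]
  ring

theorem LF_add_left {B : Type*} [CommRing B] (d : ℕ) (w v c : ℕ → B) (t : B) :
    LF d (fun i => w i + t * v i) c = LF d w c + t * (3 * v 0 * (2 * w 0 + t * v 0) * c 0 +
      DQ (d - 1) (fun i => v (i + 1)) (fun i => c (i + 1))) := by
  unfold LF
  rw [DQ_comm (d - 1) (fun i => w (i + 1) + t * v (i + 1)), DQ_add_right (d - 1) _ (fun i => w (i + 1)) (fun i => t * v (i + 1)),
    DQ_smul (d - 1) t _ (fun i => v (i + 1)), DQ_comm _ (fun i => c (i + 1)), DQ_comm _ (fun i => c (i + 1))]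
  ring

theorem newton_step_alg {B : Type*} [CommRing B] (M b x c : Ideal B) (hM : M ^ 3 ≤ c) (hb : b * b ≤ c)
    (hx : M * x ≤ c) (d : ℕ) (s : B) (T : Finset ℕ) (N : ℕ) (z v u cc : ℕ → B) (β be be' g : B) (f βj bj : ℕ → B)
    (hz0 : z 0 ∈ M) (hv0 : v 0 ∈ M) (hc0 : cc 0 ∈ M) (hz : ∀ i, z (i + 1) ∈ b)
    (hv : ∀ i, v (i + 1) ∈ b) (hcc : ∀ i, cc (i + 1) ∈ b) (hu : ∀ i, u i = z i + s * v i)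
    (hbe : be = 1 + s * be') (hβj : ∀ j ∈ T, βj j ∈ M) (hf : ∀ j ∈ T, f j ∈ M ^ 2) (hzx : ∀ j ∈ T, z j ∈ x)
    (E E0 E1 : B) (hE1 : E1 ∈ c) (hE : E = E0 + s * E1)
    (hE0 : E0 = LF d z cc + β * F0 d z + ∑ j ∈ T, βj j * z j)
    (h : be * F0 d u + ∑ j ∈ T, bj j * (z j + s * (f j - z j)) - g = s ^ (N + 1) * E) :
    ∃ E' ∈ c, (be - s ^ (N + 1) * β) * F0 d (fun i => u i - s ^ (N + 1) * cc i) +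
      ∑ j ∈ T, (bj j - s ^ (N + 1) * βj j) * (z j + s * (f j - z j)) - g = s ^ (N + 1 + 1) * E' := by
  have hu' : u = fun i => z i + s * v i := funext hu
  have e1 : F0 d u = F0 d z + s * (LF d z v + s * HF d z v + s ^ 2 * v 0 ^ 3) := by
    rw [hu', F0_add]; ring
  have e2 : LF d u cc = LF d z cc + s * (3 * v 0 * (2 * z 0 + s * v 0) * cc 0 +
      DQ (d - 1) (fun i => v (i + 1)) (fun i => cc (i + 1))) := by
    rw [hu', LF_add_left]
  have e3 : F0 d (fun i => u i - s ^ (N + 1) * cc i) = F0 d u - s ^ (N + 1) * LF d u cc +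
      s ^ (N + 1) * s ^ (N + 1) * HF d u cc - s ^ (N + 1) * s ^ (N + 1) * s ^ (N + 1) * cc 0 ^ 3 := by
    have := F0_add d u cc (- s ^ (N + 1))
    simp only [neg_mul, ← sub_eq_add_neg] at this
    rw [this, Even.neg_pow (by decide), Odd.neg_pow (by decide)]
    ring
  have e4 : ∑ j ∈ T, (bj j - s ^ (N + 1) * βj j) * (z j + s * (f j - z j)) =
      ∑ j ∈ T, bj j * (z j + s * (f j - z j)) - s ^ (N + 1) * ∑ j ∈ T, βj j * z j
       - s ^ (N + 1) * s * ∑ j ∈ T, βj j * (f j - z j) := by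
    rw [Finset.mul_sum, Finset.mul_sum, ← Finset.sum_sub_distrib, ← Finset.sum_sub_distrib]
    exact Finset.sum_congr rfl fun j _ => by ring
  have hM3 : ∀ x y w : B, x ∈ M → y ∈ M → w ∈ M → x * y * w ∈ c := by
    intro x y w hx hy hw
    apply hM
    rw [pow_succ, pow_two]
    exact Ideal.mul_mem_mul (Ideal.mul_mem_mul hx hy) hw
  have hsum : ∑ j ∈ T, βj j * (f j - z j) ∈ c := by
    refine Ideal.sum_mem _ fun j hj => ?_
    rw [mul_sub]
    refine Ideal.sub_mem _ (hM ?_) (hx (Ideal.mul_mem_mul (hβj j hj) (hzx j hj)))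
    rw [pow_succ, mul_comm (βj j)]
    exact Ideal.mul_mem_mul (hf j hj) (hβj j hj)
  have hu0 : u 0 ∈ M := by rw [hu]; exact Ideal.add_mem _ hz0 (Ideal.mul_mem_left _ _ hv0)
  have hub : ∀ i, u (i + 1) ∈ b := fun i => by rw [hu]; exact Ideal.add_mem _ (hz i) (Ideal.mul_mem_left _ _ (hv i))
  have hLF : ∀ w v : ℕ → B, w 0 ∈ M → v 0 ∈ M → (∀ i, w (i + 1) ∈ b) → (∀ i, v (i + 1) ∈ b) → LF d w v ∈ c := by
    intro w v h1 h2 h3 h4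
    unfold LF
    refine Ideal.add_mem _ ?_ (DQ_mem b c hb _ _ _ h3 h4)
    have : 3 * w 0 ^ 2 * v 0 = 3 * (w 0 * w 0 * v 0) := by ring
    rw [this]; exact Ideal.mul_mem_left _ _ (hM3 _ _ _ h1 h1 h2)
  have hHF : ∀ w v : ℕ → B, w 0 ∈ M → v 0 ∈ M → (∀ i, v (i + 1) ∈ b) → HF d w v ∈ c := by
    intro w v h1 h2 h4
    unfold HF
    refine Ideal.add_mem _ ?_ (Qf_mem b c hb _ _ fun i _ => h4 i)
    have : 3 * w 0 * v 0 ^ 2 = 3 * (w 0 * v 0 * v 0) := by ring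
    rw [this]; exact Ideal.mul_mem_left _ _ (hM3 _ _ _ h1 h2 h2)
  have hcube : ∀ x ∈ M, x ^ 3 ∈ c := fun x hx => hM (Ideal.pow_mem_pow hx 3)
  have hD : 3 * v 0 * (2 * z 0 + s * v 0) * cc 0 + DQ (d - 1) (fun i => v (i + 1)) (fun i => cc (i + 1)) ∈ c := by
    refine Ideal.add_mem _ ?_ (DQ_mem b c hb _ _ _ hv hcc)
    have : 3 * v 0 * (2 * z 0 + s * v 0) * cc 0 = 3 * (v 0 * (2 * z 0 + s * v 0) * cc 0) := by ring
    rw [this]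
    exact Ideal.mul_mem_left _ _ (hM3 _ _ _ hv0 (Ideal.add_mem _ (Ideal.mul_mem_left _ _ hz0) (Ideal.mul_mem_left _ _ hv0)) hc0)
  have hF0u : LF d z v + s * HF d z v + s ^ 2 * v 0 ^ 3 ∈ c :=
    Ideal.add_mem _ (Ideal.add_mem _ (hLF _ _ hz0 hv0 hz hv) (Ideal.mul_mem_left _ _ (hHF _ _ hz0 hv0 hv)))
      (Ideal.mul_mem_left _ _ (hcube _ hv0))
  have hLu := hLF u cc hu0 hc0 hub hcc
  have hHu := hHF u cc hu0 hc0 hcc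
  have hc3 := hcube _ hc0
  set DD := 3 * v 0 * (2 * z 0 + s * v 0) * cc 0 + DQ (d - 1) (fun i => v (i + 1)) (fun i => cc (i + 1))
  set FF := LF d z v + s * HF d z v + s ^ 2 * v 0 ^ 3
  set S1 := ∑ j ∈ T, bj j * (z j + s * (f j - z j))
  set S2 := ∑ j ∈ T, βj j * z j
  set S3 := ∑ j ∈ T, βj j * (f j - z j)
  refine ⟨E1 - S3 - be' * LF d u cc - DD - β * FF + be * s ^ N * HF d u cc - be * s ^ N * s ^ (N + 1) * cc 0 ^ 3
    + β * s ^ N * LF d u cc - β * s ^ N * s ^ (N + 1) * HF d u cc + β * s ^ N * s ^ (N + 1) * s ^ (N + 1) * cc 0 ^ 3, ?_, ?_⟩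
  · exact Ideal.add_mem _ (Ideal.sub_mem _ (Ideal.add_mem _ (Ideal.sub_mem _ (Ideal.add_mem _ (Ideal.sub_mem _ (Ideal.sub_mem _
      (Ideal.sub_mem _ (Ideal.sub_mem _ hE1 hsum) (Ideal.mul_mem_left _ _ hLu)) hD) (Ideal.mul_mem_left _ _ hF0u))
      (Ideal.mul_mem_left _ _ hHu)) (Ideal.mul_mem_left _ _ hc3)) (Ideal.mul_mem_left _ _ hLu))
      (Ideal.mul_mem_left _ _ hHu)) (Ideal.mul_mem_left _ _ hc3)
  · rw [e3, e4]
    have h' : g = be * F0 d u + S1 - s ^ (N + 1) * (E0 + s * E1) := by rw [← hE, ← h]; ring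
    have h0 : E0 = (LF d u cc - s * DD) + β * (F0 d u - s * FF) + S2 := by rw [hE0, e1, e2]; ring
    rw [h', h0, hbe]
    generalize F0 d u = a1
    generalize LF d u cc = a2
    generalize HF d u cc = a3
    ring

/-- the ideal `(y, x, z_0^2)` -/
def bI {A : Type*} [CommRing A] (d n : ℕ) (z : ℕ → A) : Ideal A :=
  yI d z ⊔ xI d n z ⊔ Ideal.span {z 0 ^ 2}

/-- the tangent ideal -/
def TI {A : Type*} [CommRing A] (d n : ℕ) (z : ℕ → A) : Ideal A where
  carrier := {E | ∃ (c : ℕ → A) (β : A) (βj : ℕ → A), c 0 ∈ mI n z ∧ (∀ i, c (i + 1) ∈ bI d n z) ∧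
    (∀ j, βj j ∈ mI n z) ∧ E = LF d z c + β * F0 d z + ∑ j ∈ Finset.Ioo d n, βj j * z j}
  add_mem' := by
    rintro _ _ ⟨c, β, βj, h1, h2, h3, rfl⟩ ⟨c', β', βj', h1', h2', h3', rfl⟩
    refine ⟨fun i => c i + c' i, β + β', fun j => βj j + βj' j, Ideal.add_mem _ h1 h1',
      fun i => Ideal.add_mem _ (h2 i) (h2' i), fun i => Ideal.add_mem _ (h3 i) (h3' i), ?_⟩
    unfold LF
    rw [DQ_add_right (d - 1) _ (fun i => c (i + 1)) (fun i => c' (i + 1))]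
    simp only [add_mul, Finset.sum_add_distrib]
    ring
  zero_mem' := by
    refine ⟨fun _ => 0, 0, fun _ => 0, Ideal.zero_mem _, fun _ => Ideal.zero_mem _, fun _ => Ideal.zero_mem _, ?_⟩
    simp [LF, DQ]
  smul_mem' := by
    rintro a _ ⟨c, β, βj, h1, h2, h3, rfl⟩
    refine ⟨fun i => a * c i, a * β, fun j => a * βj j, Ideal.mul_mem_left _ _ h1,
      fun i => Ideal.mul_mem_left _ _ (h2 i), fun i => Ideal.mul_mem_left _ _ (h3 i), ?_⟩
    unfold LF
    rw [DQ_smul (d - 1) a _ (fun i => c (i + 1)), smul_eq_mul]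
    simp only [mul_assoc, ← Finset.mul_sum]
    ring

theorem TI_mem {A : Type*} [CommRing A] {d n : ℕ} {z : ℕ → A} {E : A} (h : E ∈ TI d n z) :
    ∃ (c : ℕ → A) (β : A) (βj : ℕ → A), c 0 ∈ mI n z ∧ (∀ i, c (i + 1) ∈ bI d n z) ∧
    (∀ j, βj j ∈ mI n z) ∧ E = LF d z c + β * F0 d z + ∑ j ∈ Finset.Ioo d n, βj j * z j := h

theorem TI_of {A : Type*} [CommRing A] {d n : ℕ} {z : ℕ → A} (c : ℕ → A) (β : A) (βj : ℕ → A)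
    (h0 : c 0 ∈ mI n z) (h1 : ∀ i, c (i + 1) ∈ bI d n z) (h2 : ∀ j, βj j ∈ mI n z) :
    LF d z c + β * F0 d z + ∑ j ∈ Finset.Ioo d n, βj j * z j ∈ TI d n z := ⟨c, β, βj, h0, h1, h2, rfl⟩

theorem TI_F0 {A : Type*} [CommRing A] (d n : ℕ) (z : ℕ → A) : F0 d z ∈ TI d n z := by
  have := TI_of (d := d) (n := n) (z := z) (fun _ => 0) 1 (fun _ => 0) (Ideal.zero_mem _) (fun _ => Ideal.zero_mem _) (fun _ => Ideal.zero_mem _)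
  simpa [LF, DQ] using this

theorem TI_x {A : Type*} [CommRing A] (d n : ℕ) (z : ℕ → A) (a : A) (ha : a ∈ mI n z) (j : ℕ) (hj : j ∈ Set.Ioo d n) :
    a * z j ∈ TI d n z := by
  classical
  have := TI_of (d := d) (n := n) (z := z) (fun _ => 0) 0 (fun i => if i = j then a else 0) (Ideal.zero_mem _) (fun _ => Ideal.zero_mem _) (fun i => by
    split_ifs
    · exact ha
    · exact Ideal.zero_mem _)
  have h0 : j ∈ Finset.Ioo d n := by simpa using hj
  simp only [ite_mul, zero_mul, Finset.sum_ite_eq', h0, if_true] at this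
  simpa [LF, DQ] using this

theorem TI_z0 {A : Type*} [CommRing A] (d n : ℕ) (z : ℕ → A) (a : A) (ha : a ∈ mI n z) :
    3 * z 0 ^ 2 * a ∈ TI d n z := by
  classical
  have := TI_of (d := d) (n := n) (z := z) (fun i => if i = 0 then a else 0) 0 (fun i => 0) (by simpa using ha) (fun _ => by simp) (fun i => Ideal.zero_mem _)
  simpa [LF, DQ] using this

theorem TI_last {A : Type*} [CommRing A] (d n : ℕ) (hd : 1 ≤ d) (hev : Even (d - 1)) (z : ℕ → A) (a : A) (ha : a ∈ bI d n z) :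
    2 * z d * a ∈ TI d n z := by
  classical
  have := TI_of (d := d) (n := n) (z := z) (fun i => if i = d then a else 0) 0 (fun i => 0) (by
      rw [if_neg (by omega)]; exact Ideal.zero_mem _) (fun i => by
      split_ifs
      · exact ha
      · exact Ideal.zero_mem _) (fun i => Ideal.zero_mem _)
  unfold LF DQ at this
  beta_reduce at this
  rw [if_neg (show ¬ 0 = d by omega), if_pos hev, Finset.sum_eq_zero] at this
  · rw [if_pos (show d - 1 + 1 = d by omega), show d - 1 + 1 = d by omega] at this
    simpa using this
  · intro i hi
    rw [Finset.mem_range] at hi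
    rw [Nat.even_iff] at hev
    rw [if_neg (by omega), if_neg (by omega)]; simp

theorem TI_pair {A : Type*} [CommRing A] (d n : ℕ) (z : ℕ → A) (a : A) (ha : a ∈ bI d n z)
    (i : ℕ) (hi : i < (d - 1 + 1) / 2) :
    z (2 * i + 1) * a ∈ TI d n z ∧ z (2 * i + 1 + 1) * a ∈ TI d n z := by
  classical
  have key : ∀ l, (fun i => if i = l + 1 then a else 0) 0 ∈ mI n z ∧ ∀ i, (fun i => if i = l + 1 then a else 0) (i + 1) ∈ bI d n z := by
    intro l
    refine ⟨by simp, fun i => ?_⟩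
    beta_reduce
    split_ifs
    · exact ha
    · exact Ideal.zero_mem _
  constructor
  · have := TI_of (d := d) (n := n) (z := z) (fun j => if j = 2 * i + 1 + 1 then a else 0) 0 (fun i => 0) (key (2 * i + 1)).1 (key (2 * i + 1)).2 (fun i => Ideal.zero_mem _)
    unfold LF DQ at this
    have h0 : (if Even (d - 1) then 2 * z (d - 1 + 1) * (if d - 1 + 1 = 2 * i + 1 + 1 then a else 0) else 0) = 0 := by
      split_ifs with h1 h2
      · rw [Nat.even_iff] at h1; omega
      · simp
      · rfl
    simp only [h0] at this
    rw [Finset.sum_eq_single i] at this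
    · simpa using this
    · intro b _ hb
      rw [if_neg (by omega), if_neg (by omega)]; simp
    · intro h; exact absurd (Finset.mem_range.mpr hi) h
  · have := TI_of (d := d) (n := n) (z := z) (fun j => if j = 2 * i + 1 then a else 0) 0 (fun i => 0) (key (2 * i)).1 (key (2 * i)).2 (fun i => Ideal.zero_mem _)
    unfold LF DQ at this
    have h0 : (if Even (d - 1) then 2 * z (d - 1 + 1) * (if d - 1 + 1 = 2 * i + 1 then a else 0) else 0) = 0 := by
      split_ifs with h1 h2
      · rw [Nat.even_iff] at h1; omega
      · simp
      · rfl
    simp only [h0] at this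
    rw [Finset.sum_eq_single i] at this
    · simpa [mul_comm] using this
    · intro b _ hb
      rw [if_neg (by omega), if_neg (by omega)]; simp
    · intro h; exact absurd (Finset.mem_range.mpr hi) h

theorem mem_mI {A : Type*} [CommRing A] {n : ℕ} (z : ℕ → A) {i : ℕ} (hi : i < n) : z i ∈ mI n z :=
  Ideal.subset_span ⟨i, hi, rfl⟩
theorem mem_yI {A : Type*} [CommRing A] {d : ℕ} (z : ℕ → A) {i : ℕ} (h1 : 1 ≤ i) (hi : i ≤ d) : z i ∈ yI d z :=
  Ideal.subset_span ⟨i, ⟨h1, hi⟩, rfl⟩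
theorem mem_xI {A : Type*} [CommRing A] {d n : ℕ} (z : ℕ → A) {i : ℕ} (h1 : d < i) (hi : i < n) : z i ∈ xI d n z :=
  Ideal.subset_span ⟨i, ⟨h1, hi⟩, rfl⟩

theorem cI_le_TI {A : Type*} [CommRing A] (d n : ℕ) (hd : 1 ≤ d) (hdn : d < n) (z : ℕ → A)
    (h2 : IsUnit (2 : A) ∨ (2 : A) = 0) : cI d n z ≤ TI d n z := by
  have hyb : ∀ i, 1 ≤ i → i ≤ d → z i ∈ bI d n z := fun i h1 h2 =>
    (le_sup_left.trans le_sup_left : yI d z ≤ bI d n z) (mem_yI z h1 h2)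
  have hz0b : z 0 ^ 2 ∈ bI d n z := (le_sup_right : Ideal.span {z 0 ^ 2} ≤ bI d n z) (Ideal.mem_span_singleton_self _)
  have hz0m := mem_mI (n := n) z (i := 0) (by omega)
  -- paired variables
  have hpair : ∀ i, 1 ≤ i → i ≤ d → (¬ (Even (d - 1) ∧ i = d)) → ∀ a ∈ bI d n z, z i * a ∈ TI d n z := by
    intro i h1 hid hne a ha
    have : i - 1 < 2 * ((d - 1 + 1) / 2) := by
      rw [Nat.even_iff] at hne
      omega
    rcases Nat.even_or_odd' (i - 1) with ⟨j, hj | hj⟩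
    · have := (TI_pair d n z a ha j (by omega)).1
      rwa [show 2 * j + 1 = i by omega] at this
    · have := (TI_pair d n z a ha j (by omega)).2
      rwa [show 2 * j + 1 + 1 = i by omega] at this
  have hunit : IsUnit (2 : A) → ∀ i, 1 ≤ i → i ≤ d → ∀ a ∈ bI d n z, z i * a ∈ TI d n z := by
    intro hu i h1 hid a ha
    by_cases hne : Even (d - 1) ∧ i = d
    · obtain ⟨hev, rfl⟩ := hne
      obtain ⟨t, ht⟩ := hu.exists_left_inv
      have := Ideal.mul_mem_left _ t (TI_last i n hd hev z a ha)
      rwa [show t * (2 * z i * a) = (t * 2) * (z i * a) by ring, ht, one_mul] at this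
    · exact hpair i h1 hid hne a ha
  have hsum : ∑ i ∈ Finset.range ((d - 1 + 1) / 2), z (2 * i + 1) * z (2 * i + 1 + 1) ∈ TI d n z := by
    refine Ideal.sum_mem _ fun i hi => ?_
    rw [Finset.mem_range] at hi
    exact (TI_pair d n z _ (hyb _ (by omega) (by omega)) i hi).1
  have hF := TI_F0 d n z
  have h23 : (2 : A) = 0 → ∀ a ∈ mI n z, z 0 ^ 2 * a ∈ TI d n z := by
    intro h a ha
    have := TI_z0 d n z a ha
    rwa [show (3 : A) = 2 + 1 by norm_num, h, zero_add, one_mul] at this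
  -- cube
  have hcube : z 0 ^ 2 * z 0 ∈ TI d n z := by
    rcases h2 with hu | h0
    · have hQ : Qf (d - 1) (fun i => z (i + 1)) ∈ TI d n z := by
        unfold Qf
        refine Ideal.add_mem _ hsum ?_
        split_ifs
        · rw [sq]
          exact hunit hu _ (by omega) (by omega) _ (hyb _ (by omega) (by omega))
        · exact Ideal.zero_mem _
      have := Ideal.sub_mem _ hF hQ
      unfold F0 at this
      rw [add_sub_cancel_left] at this
      rwa [← pow_succ]
    · exact h23 h0 _ hz0m
  have hsq : Even (d - 1) → z d * z d ∈ TI d n z := by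
    intro hev
    rcases h2 with hu | h0
    · exact hunit hu _ hd le_rfl _ (hyb _ hd le_rfl)
    · unfold F0 Qf at hF
      rw [if_pos hev, show d - 1 + 1 = d by omega] at hF
      rw [show d - 1 + 1 = d by omega] at hsum
      have := Ideal.sub_mem _ (Ideal.sub_mem _ hF hsum) hcube
      beta_reduce at this
      rw [show d - 1 + 1 = d by omega] at this
      ring_nf at this ⊢
      exact this
  unfold cI
  refine sup_le (sup_le ?_ ?_) ?_
  · rw [Ideal.mul_le]
    intro a ha b hb
    unfold xI at hb
    induction hb using Submodule.span_induction with
    | mem x hx => obtain ⟨j, hj, rfl⟩ := hx; exact TI_x d n z a ha j hj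
    | zero => rw [mul_zero]; exact Ideal.zero_mem _
    | add x y _ _ hx hy => rw [mul_add]; exact Ideal.add_mem _ hx hy
    | smul c x _ hx => rw [smul_eq_mul, mul_left_comm]; exact Ideal.mul_mem_left _ _ hx
  · rw [sq, yI, Ideal.span_mul_span, Ideal.span_le]
    rintro _ ⟨_, ⟨i, ⟨hi1, hi2⟩, rfl⟩, _, ⟨j, ⟨hj1, hj2⟩, rfl⟩, rfl⟩
    beta_reduce
    rw [SetLike.mem_coe]
    by_cases hi : Even (d - 1) ∧ i = d
    · by_cases hj : Even (d - 1) ∧ j = d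
      · rw [hi.2, hj.2]; exact hsq hi.1
      · rw [mul_comm]; exact hpair j hj1 hj2 hj _ (hyb i hi1 hi2)
    · exact hpair i hi1 hi2 hi _ (hyb j hj1 hj2)
  · rw [mI, Ideal.span_mul_span, Ideal.span_le]
    rintro _ ⟨_, ⟨i, hi, rfl⟩, _, rfl, rfl⟩
    rw [Set.mem_Iio] at hi
    beta_reduce
    rw [SetLike.mem_coe]
    rcases Nat.eq_zero_or_pos i with rfl | hi0
    · rw [mul_comm]; exact hcube
    by_cases hid : i ≤ d
    · rcases h2 with hu | h0
      · exact hunit hu i hi0 hid _ hz0b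
      · rw [mul_comm]; exact h23 h0 _ (mem_mI z hi)
    · rw [mul_comm]
      refine TI_x d n z _ ?_ i ⟨by omega, hi⟩
      rw [sq]; exact Ideal.mul_mem_left _ _ hz0m

end Part6

section Part6b
open Polynomial

theorem bI_sq_le {A : Type*} [CommRing A] (d n : ℕ) (hdn : d < n) (z : ℕ → A) : bI d n z * bI d n z ≤ cI d n z := by
  have hm := mI_eq d n hdn z
  have hyb : yI d z ≤ mI n z := by rw [hm]; exact le_sup_right.trans le_sup_left
  have hxb : xI d n z ≤ mI n z := by rw [hm]; exact le_sup_right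
  have hz0 : Ideal.span {z 0 ^ 2} ≤ mI n z := by
    rw [Ideal.span_singleton_le_iff_mem, sq]
    exact Ideal.mul_mem_left _ _ (mem_mI z (by omega))
  have h1 : mI n z * xI d n z ≤ cI d n z := le_sup_left.trans le_sup_left
  have h2 : yI d z ^ 2 ≤ cI d n z := le_sup_right.trans le_sup_left
  have h3 : mI n z * Ideal.span {z 0 ^ 2} ≤ cI d n z := le_sup_right
  have e1 := (Ideal.mul_mono_left hyb).trans h1
  have e2 := (Ideal.mul_mono_left hyb).trans h3
  have e3 := (Ideal.mul_mono_left hxb).trans h1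
  have e4 := (Ideal.mul_mono_left hxb).trans h3
  have e5 := (Ideal.mul_mono_left hz0).trans h1
  have e6 := (Ideal.mul_mono_left hz0).trans h3
  rw [sq] at h2
  unfold bI
  simp only [Ideal.sup_mul, Ideal.mul_sup]
  refine sup_le (sup_le (sup_le (sup_le h2 ?_) ?_) (sup_le (sup_le e1 e3) e5)) (sup_le (sup_le e2 e4) e6)
  · rw [mul_comm]; exact e1
  · rw [mul_comm]; exact e2

theorem F0_mem_cI {A : Type*} [CommRing A] (d n : ℕ) (hd : 1 ≤ d) (hdn : d < n) (z : ℕ → A) : F0 d z ∈ cI d n z := by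
  have h2 : yI d z ^ 2 ≤ cI d n z := le_sup_right.trans le_sup_left
  have h3 : mI n z * Ideal.span {z 0 ^ 2} ≤ cI d n z := le_sup_right
  unfold F0
  refine Ideal.add_mem _ ?_ (h3 ?_)
  · rw [sq] at h2
    exact Qf_mem _ _ h2 _ _ fun i hi => mem_yI z (by omega) (by omega)
  · have e : z 0 ^ 3 = z 0 * z 0 ^ 2 := by ring
    rw [e]
    exact Ideal.mul_mem_mul (mem_mI z (by omega)) (Ideal.mem_span_singleton_self _)

theorem newton {A : Type*} [CommRing A] (d n : ℕ) (hd : 1 ≤ d) (hdn : d < n) (z : ℕ → A) (hzn : ∀ i, n ≤ i → z i = 0)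
    (h2 : IsUnit (2 : A) ∨ (2 : A) = 0) (f : ℕ → A) (hf : ∀ j ∈ Finset.Ioo d n, f j ∈ mI n z ^ 2) (g : A) (hg : g ∈ cI d n z) (N : ℕ) :
    ∃ (v : ℕ → A[X]) (be' : A[X]) (bj : ℕ → A[X]) (E : A[X]), E ∈ (cI d n z).map C ∧ v 0 ∈ (mI n z).map C ∧
      (∀ i, v (i + 1) ∈ (bI d n z).map C) ∧
      (1 + X * be') * F0 d (fun i => C (z i) + X * v i) +
        ∑ j ∈ Finset.Ioo d n, bj j * (C (z j) + X * (C (f j) - C (z j))) -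
        (C (F0 d z) + X * (C g - C (F0 d z))) = X ^ (N + 1) * E := by
  have hzb : ∀ i, z (i + 1) ∈ bI d n z := by
    intro i
    by_cases h1 : i + 1 ≤ d
    · exact (le_sup_left.trans le_sup_left : yI d z ≤ bI d n z) (mem_yI z (by omega) h1)
    by_cases h2 : i + 1 < n
    · exact (le_sup_right.trans le_sup_left : xI d n z ≤ bI d n z) (mem_xI z (by omega) h2)
    · rw [hzn _ (by omega)]; exact Ideal.zero_mem _
  induction N with
  | zero =>
    refine ⟨fun _ => 0, 0, fun _ => 0, - (C g - C (F0 d z)), ?_, Ideal.zero_mem _, fun _ => Ideal.zero_mem _, ?_⟩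
    · rw [← C_sub, ← C_neg]
      exact Ideal.mem_map_of_mem _ (neg_mem (Ideal.sub_mem _ hg (F0_mem_cI d n hd hdn z)))
    · simp only [mul_zero, add_zero, one_mul, zero_mul, Finset.sum_const_zero]
      rw [← F0_map C]
      ring
  | succ N ih =>
    obtain ⟨v, be', bj, E, hE, hv0, hv, h⟩ := ih
    rw [Ideal.mem_map_C_iff] at hE
    obtain ⟨cc, β, βj, hc0, hcc, hβj, hE0⟩ := TI_mem (cI_le_TI d n hd hdn z h2 (hE 0))
    have hmap : ∀ I J K : Ideal A, I * J ≤ K → I.map C * J.map C ≤ (K.map C : Ideal A[X]) := by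
      intro I J K h
      rw [← Ideal.map_mul]; exact Ideal.map_mono h
    have := newton_step_alg (B := A[X]) ((mI n z).map C) ((bI d n z).map C) ((xI d n z).map C) ((cI d n z).map C)
      (by rw [← Ideal.map_pow]; exact Ideal.map_mono (mI_cube_le d n hdn z))
      (hmap _ _ _ (bI_sq_le d n hdn z))
      (hmap _ _ _ (le_sup_left.trans le_sup_left)) d X (Finset.Ioo d n) N (fun i => C (z i)) v (fun i => C (z i) + X * v i)
      (fun i => C (cc i)) (C β) (1 + X * be') be' (C (F0 d z) + X * (C g - C (F0 d z))) (fun i => C (f i)) (fun i => C (βj i)) bj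
      (Ideal.mem_map_of_mem _ (mem_mI z (by omega))) hv0 (Ideal.mem_map_of_mem _ hc0) (fun i => Ideal.mem_map_of_mem _ (hzb i))
      hv (fun i => Ideal.mem_map_of_mem _ (hcc i)) (fun _ => rfl) rfl (fun j _ => Ideal.mem_map_of_mem _ (hβj j))
      (fun j hj => by rw [← Ideal.map_pow]; exact Ideal.mem_map_of_mem _ (hf j hj))
      (fun j hj => by
        rw [Finset.mem_Ioo] at hj
        exact Ideal.mem_map_of_mem _ (mem_xI z hj.1 hj.2))
      E (C (E.coeff 0)) E.divX (by
        rw [Ideal.mem_map_C_iff]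
        intro m
        rw [coeff_divX]; exact hE _) (by rw [add_comm]; exact (X_mul_divX_add E).symm)
      (by
        rw [hE0]
        simp only [C_add, C_mul, map_sum, LF, DQ_map C, F0_map C, C_pow, map_ofNat])
      h
    obtain ⟨E', hE', hh⟩ := this
    refine ⟨fun i => v i - X ^ N * C (cc i), be' - X ^ N * C β, fun j => bj j - X ^ (N + 1) * C (βj j), E', hE', ?_, ?_, ?_⟩
    · exact Ideal.sub_mem _ hv0 (Ideal.mul_mem_left _ _ (Ideal.mem_map_of_mem _ hc0))
    · exact fun i => Ideal.sub_mem _ (hv i) (Ideal.mul_mem_left _ _ (Ideal.mem_map_of_mem _ (hcc i)))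
    · rw [← hh]
      have e1 : (fun i => C (z i) + X * (v i - X ^ N * C (cc i))) = fun i => C (z i) + X * v i - X ^ (N + 1) * C (cc i) := by
        funext i; ring
      rw [e1]
      ring

end Part6b

section Part7
open Polynomial

/-- coefficientwise extension of a functional -/
noncomputable def pis {k A : Type*} [Field k] [CommRing A] [Algebra k A] (π : A →ₗ[k] k) (P : A[X]) : k[X] :=
  ∑ i ∈ P.support, monomial i (π (P.coeff i))

theorem pis_coeff {k A : Type*} [Field k] [CommRing A] [Algebra k A] (π : A →ₗ[k] k) (P : A[X]) (m : ℕ) :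
    (pis π P).coeff m = π (P.coeff m) := by
  classical
  unfold pis
  rw [finset_sum_coeff]
  simp only [coeff_monomial]
  rw [Finset.sum_ite_eq']
  split_ifs with h
  · rfl
  · rw [notMem_support_iff.mp h, map_zero]

theorem pis_eval {k A : Type*} [Field k] [CommRing A] [Algebra k A] (π : A →ₗ[k] k) (P : A[X]) (s : k) :
    (pis π P).eval s = π (P.eval (algebraMap k A s)) := by
  unfold pis
  rw [eval_finset_sum, eval_eq_sum, Polynomial.sum, map_sum]
  refine Finset.sum_congr rfl fun i _ => ?_
  rw [eval_monomial, ← map_pow, mul_comm (P.coeff i), ← Algebra.smul_def, map_smul, smul_eq_mul, mul_comm]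

theorem pis_dvd {k A : Type*} [Field k] [CommRing A] [Algebra k A] (π : A →ₗ[k] k) (P Q E : A[X]) (N : ℕ)
    (h : P - Q = X ^ N * E) : X ^ N ∣ pis π P - pis π Q := by
  rw [X_pow_dvd_iff]
  intro d hd
  rw [coeff_sub, pis_coeff, pis_coeff, ← map_sub, ← coeff_sub, h, coeff_X_pow_mul', if_neg (by omega), map_zero]

theorem exists_dual {k V : Type*} [Field k] [AddCommGroup V] [Module k V] {r : ℕ} (w : Fin r → V)
    (hw : LinearIndependent k w) : ∃ π : Fin r → (V →ₗ[k] k), ∀ t t', π t (w t') = if t' = t then 1 else 0 := by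
  classical
  let c : V →ₗ[k] (Fin r →₀ k) := hw.repr ∘ₗ (LinearMap.exists_leftInverse_of_injective (Submodule.span k (Set.range w)).subtype (Submodule.ker_subtype _)).choose
  have hc : ∀ t, c (w t) = Finsupp.single t 1 := by
    intro t
    have := (LinearMap.exists_leftInverse_of_injective (Submodule.span k (Set.range w)).subtype (Submodule.ker_subtype _)).choose_spec
    have h2 := LinearMap.congr_fun this ⟨w t, Submodule.subset_span ⟨t, rfl⟩⟩
    simp only [LinearMap.comp_apply, Submodule.subtype_apply, LinearMap.id_apply] at h2
    simp only [c, LinearMap.comp_apply]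
    rw [h2]
    exact hw.repr_eq_single t _ rfl
  refine ⟨fun t => Finsupp.lapply t ∘ₗ c, fun t t' => ?_⟩
  rw [LinearMap.comp_apply, hc, Finsupp.lapply_apply, Finsupp.single_apply]

theorem semicont {k A : Type*} [Field k] [Infinite k] [CommRing A] [Algebra k A] [Module.Finite k A] {ι : Type*} [Fintype ι]
    (P : ι → A[X]) : ∃ N : ℕ, ∀ γ : ι → A[X], (∀ j, ∃ E, γ j - P j = X ^ N * E) → ∀ h : k[X], h ≠ 0 →
      ∃ s : k, h.eval s ≠ 0 ∧
        Module.finrank k (A ⧸ Ideal.span (Set.range fun j => (γ j).eval (algebraMap k A s))) ≤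
        Module.finrank k (A ⧸ Ideal.span (Set.range fun j => (P j).eval 1)) := by
  classical
  set I := Ideal.span (Set.range fun j => (P j).eval 1) with hI
  let I' : Submodule k A := I.restrictScalars k
  set r := Module.finrank k I' with hr
  let b : Module.Basis (Fin r) k I' := Module.finBasis k I'
  have hb : ∀ t, ∃ c : ι → A, ∑ j, c j * (P j).eval 1 = (b t : A) := by
    intro t
    have : (b t : A) ∈ I := (b t).2
    rwa [hI, Ideal.mem_span_range_iff_exists_fun] at this
  choose c hc using hb
  have hli : LinearIndependent k (fun t => (b t : A)) := b.linearIndependent.map' I'.subtype (Submodule.ker_subtype _)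
  obtain ⟨π, hπ⟩ := exists_dual _ hli
  let W : (ι → A[X]) → Fin r → A[X] := fun γ t => ∑ j, C (c t j) * γ j
  let M : (ι → A[X]) → Matrix (Fin r) (Fin r) k[X] := fun γ => Matrix.of fun t t' => pis (π t) (W γ t')
  have hMeval : ∀ γ s, (M γ).map (evalRingHom s) = Matrix.of fun t t' => π t (∑ j, c t' j * (γ j).eval (algebraMap k A s)) := by
    intro γ s
    ext t t'
    simp only [M, W, Matrix.map_apply, Matrix.of_apply, coe_evalRingHom, pis_eval, eval_finset_sum, eval_mul, eval_C]
  have hdet : ∀ γ s, ((M γ).det).eval s = (Matrix.of fun t t' => π t (∑ j, c t' j * (γ j).eval (algebraMap k A s))).det := by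
    intro γ s
    rw [← hMeval, ← coe_evalRingHom, RingHom.map_det, RingHom.mapMatrix_apply]
  have hP1 : ((M P).det).eval 1 = 1 := by
    rw [hdet]
    have : (Matrix.of fun t t' => π t (∑ j, c t' j * (P j).eval (algebraMap k A 1))) = 1 := by
      ext t t'
      rw [Matrix.of_apply, map_one, hc, hπ, Matrix.one_apply]
      simp only [eq_comm]
    rw [this, Matrix.det_one]
  have hP0 : (M P).det ≠ 0 := by
    intro h; rw [h] at hP1; simp at hP1
  refine ⟨(M P).det.natDegree + 1, fun γ hγ h hh => ?_⟩
  set N := (M P).det.natDegree + 1 with hN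
  have hdvd : X ^ N ∣ (M γ).det - (M P).det := by
    rw [← Ideal.mem_span_singleton, ← Ideal.Quotient.mk_eq_mk_iff_sub_mem, RingHom.map_det, RingHom.map_det]
    congr 1
    ext t t'
    simp only [RingHom.mapMatrix_apply, Matrix.map_apply]
    rw [Ideal.Quotient.mk_eq_mk_iff_sub_mem, Ideal.mem_span_singleton]
    choose E hE using hγ
    refine pis_dvd (π t) (W γ t') (W P t') (∑ j, C (c t' j) * E j) N ?_
    simp only [W]
    rw [← Finset.sum_sub_distrib, Finset.mul_sum]
    refine Finset.sum_congr rfl fun j _ => ?_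
    rw [← mul_sub, hE]; ring
  have hγ0 : (M γ).det ≠ 0 := by
    intro h0
    rw [h0, zero_sub, dvd_neg] at hdvd
    have := Polynomial.natDegree_le_of_dvd hdvd hP0
    rw [natDegree_X_pow] at this
    omega
  obtain ⟨s, hs⟩ : ∃ s, ((M γ).det * h).eval s ≠ 0 := by
    by_contra hcon
    push Not at hcon
    exact mul_ne_zero hγ0 hh (Polynomial.funext fun s => by rw [hcon s, eval_zero])
  rw [eval_mul] at hs
  refine ⟨s, right_ne_zero_of_mul hs, ?_⟩
  have hs1 := left_ne_zero_of_mul hs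
  rw [hdet] at hs1
  set K := Ideal.span (Set.range fun j => (γ j).eval (algebraMap k A s)) with hK
  let K' : Submodule k A := K.restrictScalars k
  let w : Fin r → K' := fun t => ⟨∑ j, c t j * (γ j).eval (algebraMap k A s), by
    change _ ∈ K
    exact Ideal.sum_mem _ fun j _ => Ideal.mul_mem_left _ _ (Ideal.subset_span ⟨j, rfl⟩)⟩
  have hwli : LinearIndependent k w := by
    have h1 := (Matrix.linearIndependent_cols_iff_isUnit).mpr ((Matrix.isUnit_iff_isUnit_det _).mpr (isUnit_iff_ne_zero.mpr hs1))
    refine LinearIndependent.of_comp (LinearMap.pi π ∘ₗ K'.subtype) ?_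
    exact h1
  have hle : r ≤ Module.finrank k K' := by
    have := hwli.fintype_card_le_finrank
    simpa using this
  have e1 := Submodule.finrank_quotient_add_finrank K'
  have e2 := Submodule.finrank_quotient_add_finrank I'
  have e3 : Module.finrank k (A ⧸ K) = Module.finrank k (A ⧸ K') := rfl
  have e4 : Module.finrank k (A ⧸ I) = Module.finrank k (A ⧸ I') := rfl
  omega

theorem det_generic {k A : Type*} [Field k] [CommRing A] [Algebra k A] [Module.Finite k A] (ψ : A →ₐ[k] A[X])
    (hψ : ∀ a, (ψ a).eval 0 = a) : ∃ h : k[X], h ≠ 0 ∧ ∀ s : k, h.eval s ≠ 0 →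
      Function.Bijective (fun a => (ψ a).eval (algebraMap k A s)) := by
  classical
  let b := Module.finBasis k A
  let M : Matrix _ _ k[X] := Matrix.of fun i j => pis (b.coord i) (ψ (b j))
  let ev : k → (A →ₗ[k] A) := fun s => (((aeval (algebraMap k A s) : A[X] →ₐ[A] A).restrictScalars k).comp ψ).toLinearMap
  have hev : ∀ s a, ev s a = (ψ a).eval (algebraMap k A s) := by
    intro s a
    simp [ev, Polynomial.aeval_def, Polynomial.eval₂_eq_eval_map]
  have hdet : ∀ s, (M.det).eval s = LinearMap.det (ev s) := by
    intro s
    rw [← LinearMap.det_toMatrix b, ← coe_evalRingHom, RingHom.map_det, RingHom.mapMatrix_apply]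
    congr 1
    ext i j
    simp only [M, Matrix.map_apply, Matrix.of_apply, coe_evalRingHom, pis_eval, LinearMap.toMatrix_apply, hev]
    rfl
  refine ⟨M.det, ?_, ?_⟩
  · intro h
    have h0 := hdet 0
    have : ev 0 = LinearMap.id := by
      ext a
      rw [hev, map_zero, hψ]; rfl
    rw [h, this, LinearMap.det_id] at h0
    simp at h0
  · intro s hs
    rw [hdet] at hs
    have : Function.Bijective (ev s) := by
      have h1 := (LinearMap.isUnit_iff_isUnit_det _).mpr (isUnit_iff_ne_zero.mpr hs)
      exact (Module.End.isUnit_iff _).mp h1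
    convert this using 1
    funext a
    rw [hev]

end Part7

section Part8
open Polynomial

theorem mI_map {A B : Type*} [CommRing A] [CommRing B] (φ : A →+* B) (n : ℕ) (z : ℕ → A) :
    (mI n z).map φ = mI n (fun i => φ (z i)) := by
  unfold mI; rw [Ideal.map_span, ← Set.image_comp]; rfl
theorem yI_map {A B : Type*} [CommRing A] [CommRing B] (φ : A →+* B) (d : ℕ) (z : ℕ → A) :
    (yI d z).map φ = yI d (fun i => φ (z i)) := by
  unfold yI; rw [Ideal.map_span, ← Set.image_comp]; rfl
theorem xI_map {A B : Type*} [CommRing A] [CommRing B] (φ : A →+* B) (d n : ℕ) (z : ℕ → A) :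
    (xI d n z).map φ = xI d n (fun i => φ (z i)) := by
  unfold xI; rw [Ideal.map_span, ← Set.image_comp]; rfl
theorem cI_map {A B : Type*} [CommRing A] [CommRing B] (φ : A →+* B) (d n : ℕ) (z : ℕ → A) :
    (cI d n z).map φ = cI d n (fun i => φ (z i)) := by
  unfold cI
  rw [Ideal.map_sup, Ideal.map_sup, Ideal.map_mul, Ideal.map_mul, Ideal.map_pow, mI_map, yI_map, xI_map,
    Ideal.map_span, Set.image_singleton, map_pow]

theorem frob_nil {B : Type*} [CommRing B] (p : ℕ) [Fact p.Prime] [CharP B p] (e : ℕ) (S : Set B)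
    (hS : ∀ s ∈ S, s ^ p ^ e = 0) (x : B) (hx : x ∈ Ideal.span S) : x ^ p ^ e = 0 := by
  have : Ideal.span S ≤ RingHom.ker (iterateFrobenius B p e) := by
    rw [Ideal.span_le]
    intro s hs
    rw [SetLike.mem_coe, RingHom.mem_ker, iterateFrobenius_def, hS s hs]
  have h := this hx
  rwa [RingHom.mem_ker, iterateFrobenius_def] at h

theorem coords_swap {k V : Type*} [Field k] [AddCommGroup V] [Module k V] {n : ℕ} (E G : Matrix (Fin n) (Fin n) k)
    (h : E * G = 1) (x : Fin n → V) (i : Fin n) : ∑ j, E i j • ∑ l, G j l • x l = x i := by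
  classical
  simp only [Finset.smul_sum, smul_smul]
  rw [Finset.sum_comm]
  simp only [← Finset.sum_smul]
  have : ∀ l, ∑ j, E i j * G j l = (1 : Matrix (Fin n) (Fin n) k) i l := by
    intro l; rw [← h]; rfl
  simp only [this, Matrix.one_apply]
  simp

theorem F0_eval {A : Type*} [CommRing A] (d : ℕ) (a : A) (u : ℕ → A[X]) :
    (F0 d u).eval a = F0 d (fun i => (u i).eval a) := by
  rw [← coe_evalRingHom, F0_map (evalRingHom a)]

set_option maxHeartbeats 1000000 in
theorem hk_ge {k : Type*} [Field k] [IsAlgClosed k] (p : ℕ) [Fact p.Prime] [CharP k p] {n d ℓ : ℕ} (hd : 1 ≤ d)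
    (hℓ : 2 ≤ ℓ) (hn : n = d + ℓ) (f : Fin ℓ → MvPowerSeries (Fin n) k)
    (hf : ∀ i : Fin ℓ, f i ∈ (Ideal.span
      (Set.range (MvPowerSeries.X : Fin n → MvPowerSeries (Fin n) k))) ^ 2) (e : ℕ) :
    Module.finrank k (MvPowerSeries (Fin (d + 1)) k ⧸
        Ideal.span ({F0 d (XN k (d + 1))} ∪ Set.range (fun i : Fin (d + 1) =>
          (MvPowerSeries.X i : MvPowerSeries (Fin (d + 1)) k) ^ p ^ e))) ≤
    Module.finrank k (MvPowerSeries (Fin n) k ⧸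
        Ideal.span (Set.range f ∪ Set.range (fun i : Fin n =>
          (MvPowerSeries.X i : MvPowerSeries (Fin n) k) ^ p ^ e))) := by
  classical
  have hp := Fact.out (p := p.Prime)
  let Xs : Fin n → MvPowerSeries (Fin n) k := MvPowerSeries.X
  obtain ⟨J, hJ⟩ : ∃ J : Ideal (MvPowerSeries (Fin n) k), J = Ideal.span (Set.range (fun i : Fin n => (MvPowerSeries.X i : MvPowerSeries (Fin n) k) ^ p ^ e)) := ⟨_, rfl⟩
  have hJle : ∀ K : Ideal (MvPowerSeries (Fin n) k), (∀ i, (MvPowerSeries.X i : MvPowerSeries (Fin n) k) ^ p ^ e ∈ K) → J ≤ K := by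
    intro K hK
    rw [hJ, Ideal.span_le]
    rintro _ ⟨i, rfl⟩
    exact hK i
  have hXJ : ∀ i, (MvPowerSeries.X i : MvPowerSeries (Fin n) k) ^ p ^ e ∈ J := fun i => by
    rw [hJ]; exact Ideal.subset_span ⟨i, rfl⟩
  let mk : MvPowerSeries (Fin n) k →ₐ[k] (MvPowerSeries (Fin n) k ⧸ J) := Ideal.Quotient.mkₐ k J
  have hmkX : ∀ i, mk (Xs i) ^ p ^ e = 0 := by
    intro i
    rw [← map_pow]
    exact Ideal.Quotient.eq_zero_iff_mem.mpr (hXJ i)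
  have hadj : Algebra.adjoin k (Set.range (fun i : Fin n => mk (Xs i))) = ⊤ := ps_quot_adjoin J fun i => ⟨_, hXJ i⟩
  have : Module.Finite k (MvPowerSeries (Fin n) k ⧸ J) := ps_quot_finite J fun i => ⟨_, hXJ i⟩
  have : Nontrivial (MvPowerSeries (Fin n) k ⧸ J) := by
    apply Ideal.Quotient.nontrivial_iff.mpr
    intro htop
    have h1 : (1 : MvPowerSeries (Fin n) k) ∈ J := by rw [htop]; trivial
    have h2 : J ≤ Ideal.span (Set.range (MvPowerSeries.X : Fin n → MvPowerSeries (Fin n) k)) := by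
      refine hJle _ fun i => ?_
      exact Ideal.pow_mem_of_mem _ (Ideal.subset_span (Set.mem_range_self i)) _ (pow_pos hp.pos e)
    have h3 := (ps_mem_span_X_iff _).mp (h2 h1)
    simp at h3
  have : CharP (MvPowerSeries (Fin n) k ⧸ J) p := charP_of_injective_algebraMap (algebraMap k (MvPowerSeries (Fin n) k ⧸ J)).injective p
  obtain ⟨Em, Gm, hEG, hg⟩ := exists_coords (d := d) (n := n) (by omega) (f ⟨0, by omega⟩) (hf _)
  have hGE : Gm * Em = 1 := mul_eq_one_comm.mp hEG
  set zS : Fin n → MvPowerSeries (Fin n) k := fun j => ∑ i, Gm j i • Xs i with hzS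
  let z : ℕ → (MvPowerSeries (Fin n) k ⧸ J) := fun i => mk (extz zS i)
  have hz : ∀ i : Fin n, z i = mk (zS i) := fun i => by simp only [z, extz_apply]
  have hzn : ∀ i, n ≤ i → z i = 0 := by
    intro i hi
    simp only [z, extz]
    rw [dif_neg (by omega), map_zero]
  have hXz : ∀ i, Xs i = ∑ j, Em i j • zS j := fun i => (coords_swap Em Gm hEG Xs i).symm
  have hm : Ideal.span (Set.range (MvPowerSeries.X : Fin n → MvPowerSeries (Fin n) k)) ≤ mI n (extz zS) := by
    rw [Ideal.span_le]
    rintro _ ⟨i, rfl⟩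
    rw [SetLike.mem_coe, show (MvPowerSeries.X i : MvPowerSeries (Fin n) k) = Xs i from rfl, hXz]
    refine Ideal.sum_mem _ fun j _ => ?_
    rw [MvPowerSeries.smul_eq_C_mul]
    refine Ideal.mul_mem_left _ _ ?_
    rw [← extz_apply zS j]
    exact mem_mI _ j.2
  let fA : ℕ → (MvPowerSeries (Fin n) k ⧸ J) := fun i => extz (fun j => mk (f j)) i
  have hfA : ∀ i : Fin ℓ, fA i = mk (f i) := fun i => by simp only [fA, extz_apply]
  have hfm : ∀ i, fA i ∈ mI n z ^ 2 := by
    intro i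
    by_cases hi : i < ℓ
    · have h1 := hfA ⟨i, hi⟩
      simp only at h1
      rw [h1]
      have h2 := Ideal.mem_map_of_mem (mk : MvPowerSeries (Fin n) k →+* (MvPowerSeries (Fin n) k ⧸ J)) (Ideal.pow_right_mono hm 2 (hf ⟨i, hi⟩))
      rw [Ideal.map_pow, mI_map] at h2
      exact h2
    · simp only [fA, extz]
      rw [dif_neg hi]; exact Ideal.zero_mem _
  have hgA : fA 0 ∈ cI d n z := by
    have h1 := hfA ⟨0, by omega⟩
    simp only at h1
    rw [h1]
    have h2 := Ideal.mem_map_of_mem (mk : MvPowerSeries (Fin n) k →+* (MvPowerSeries (Fin n) k ⧸ J)) hg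
    rw [cI_map] at h2
    exact h2
  have h2 : IsUnit (2 : (MvPowerSeries (Fin n) k ⧸ J)) ∨ (2 : (MvPowerSeries (Fin n) k ⧸ J)) = 0 := by
    by_cases h : (2 : k) = 0
    · right
      rw [← map_ofNat (algebraMap k (MvPowerSeries (Fin n) k ⧸ J)) 2, h, map_zero]
    · left
      rw [← map_ofNat (algebraMap k (MvPowerSeries (Fin n) k ⧸ J)) 2]
      exact (isUnit_iff_ne_zero.mpr h).map _
  -- the family `P`
  let P0 : Fin ℓ → (MvPowerSeries (Fin n) k ⧸ J) := fun i => if (i : ℕ) = 0 then F0 d z else z (d + i)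
  let P : Fin ℓ → (MvPowerSeries (Fin n) k ⧸ J)[X] := fun i => C (P0 i) + X * (C (fA i) - C (P0 i))
  obtain ⟨N, hN⟩ := semicont (k := k) P
  obtain ⟨v, be', bj, EE, hEE, hv0, hv, hnewt⟩ := newton d n hd (by omega) z hzn h2 (fun j => fA (j - d)) (fun j _ => hfm _)
    (fA 0) hgA N
  let u : ℕ → (MvPowerSeries (Fin n) k ⧸ J)[X] := fun i => if i ≤ d then C (z i) + X * v i else C (z i) + X * (C (fA (i - d)) - C (z i))
  have hF0u : F0 d (fun i => C (z i) + X * v i) = F0 d u := F0_congr hd fun i hi => by simp only [u]; rw [if_pos hi]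
  have hbm : bI d n z ≤ mI n z := by
    have hme := mI_eq d n (by omega) z
    unfold bI
    refine sup_le (sup_le ?_ ?_) ?_
    · rw [hme]; exact le_sup_right.trans le_sup_left
    · rw [hme]; exact le_sup_right
    · rw [Ideal.span_singleton_le_iff_mem, sq]
      exact Ideal.mul_mem_left _ _ (mem_mI z (by omega))
  have hum : ∀ i < n, u i ∈ (mI n z).map C := by
    intro i hi
    have hzi : C (z i) ∈ (mI n z).map C := Ideal.mem_map_of_mem _ (mem_mI z hi)
    simp only [u]
    split_ifs
    · refine Ideal.add_mem _ hzi (Ideal.mul_mem_left _ _ ?_)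
      rcases i with _ | i
      · exact hv0
      · exact Ideal.map_mono hbm (hv i)
    · exact Ideal.add_mem _ hzi (Ideal.mul_mem_left _ _ (Ideal.sub_mem _ (Ideal.mem_map_of_mem _ (Ideal.pow_le_self two_ne_zero (hfm _))) hzi))
  have hzq : ∀ i < n, z i ^ p ^ e = 0 := by
    intro i hi
    refine frob_nil p e (Set.range fun i => mk (Xs i)) ?_ _ ?_
    · rintro _ ⟨i, rfl⟩; exact hmkX i
    · have := hz ⟨i, hi⟩
      simp only at this
      rw [this]
      have hmem : zS ⟨i, hi⟩ ∈ Ideal.span (Set.range Xs) := by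
        rw [hzS]
        refine Ideal.sum_mem _ fun j _ => ?_
        rw [MvPowerSeries.smul_eq_C_mul]
        exact Ideal.mul_mem_left _ _ (Ideal.subset_span ⟨j, rfl⟩)
      have hmem2 := Ideal.mem_map_of_mem mk hmem
      rw [Ideal.map_span, ← Set.range_comp] at hmem2
      exact hmem2
  have hmq : ∀ x ∈ (mI n z).map (C : (MvPowerSeries (Fin n) k ⧸ J) →+* (MvPowerSeries (Fin n) k ⧸ J)[X]), x ^ p ^ e = 0 := by
    intro x hx
    rw [mI, Ideal.map_span] at hx
    refine frob_nil p e _ ?_ x hx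
    rintro _ ⟨_, ⟨i, hi, rfl⟩, rfl⟩
    rw [← map_pow, hzq i hi, map_zero]
  -- the family of homomorphisms
  have hsumm : ∀ i, ∑ j : Fin n, Em i j • u j ∈ (mI n z).map (C : (MvPowerSeries (Fin n) k ⧸ J) →+* (MvPowerSeries (Fin n) k ⧸ J)[X]) := by
    intro i
    refine Ideal.sum_mem _ fun j _ => ?_
    rw [Algebra.smul_def]
    exact Ideal.mul_mem_left _ _ (hum j j.2)
  obtain ⟨ψS, hψS⟩ := ps_exists_hom (k := k) (B := (MvPowerSeries (Fin n) k ⧸ J)[X]) (fun i => ∑ j : Fin n, Em i j • u j)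
    (fun i => ⟨p ^ e, hmq _ (hsumm i)⟩)
  let ψ : (MvPowerSeries (Fin n) k ⧸ J) →ₐ[k] (MvPowerSeries (Fin n) k ⧸ J)[X] := Ideal.Quotient.liftₐ J ψS (by
    intro a ha
    have : J ≤ RingHom.ker ψS := by
      refine hJle _ fun i => ?_
      rw [RingHom.mem_ker, map_pow, hψS, hmq _ (hsumm i)]
    exact this ha)
  have hψmk : ∀ a, ψ (mk a) = ψS a := fun a => rfl
  have hψz : ∀ i : Fin n, ψ (z i) = u i := by
    intro i
    rw [hz, hψmk, hzS]
    simp only [map_sum, map_smul]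
    simp only [Xs, hψS]
    exact coords_swap Gm Em hGE (fun j : Fin n => u j) i
  have hu0 : ∀ i, (u i).eval 0 = z i := by
    intro i
    simp only [u]
    split_ifs <;> simp
  have hψ0 : ∀ a, (ψ a).eval 0 = a := by
    have : (((aeval (0 : (MvPowerSeries (Fin n) k ⧸ J)) : (MvPowerSeries (Fin n) k ⧸ J)[X] →ₐ[(MvPowerSeries (Fin n) k ⧸ J)] (MvPowerSeries (Fin n) k ⧸ J)).restrictScalars k).comp ψ) = AlgHom.id k (MvPowerSeries (Fin n) k ⧸ J) := by
      refine AlgHom.ext_of_adjoin_eq_top hadj ?_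
      rintro _ ⟨i, rfl⟩
      rw [AlgHom.comp_apply, AlgHom.id_apply, hψmk, show ψS (Xs i) = _ from hψS i, map_sum]
      change _ = mk (Xs i)
      conv_rhs => rw [hXz i, map_sum]
      refine Finset.sum_congr rfl fun j _ => ?_
      rw [map_smul, map_smul, ← hz, ← hu0]
      congr 1
    intro a
    have h := AlgHom.congr_fun this a
    simpa [Polynomial.aeval_def] using h
  obtain ⟨h, hh0, hh⟩ := det_generic ψ hψ0
  let γ : Fin ℓ → (MvPowerSeries (Fin n) k ⧸ J)[X] := fun i => if (i : ℕ) = 0 then (1 + X * be') * F0 d u +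
        ∑ j ∈ Finset.Ioo d n, bj j * (C (z j) + X * (C (fA (j - d)) - C (z j))) else P i
  obtain ⟨s, hs, hfin⟩ := hN γ (by
    intro i
    by_cases hi : (i : ℕ) = 0
    · refine ⟨X * EE, ?_⟩
      simp only [γ, P, P0, if_pos hi]
      rw [hF0u] at hnewt
      rw [hi, hnewt]; ring
    · exact ⟨0, by simp only [γ, if_neg hi]; ring⟩) h hh0
  have hbij := hh s hs
  let ψs : (MvPowerSeries (Fin n) k ⧸ J) →ₐ[k] (MvPowerSeries (Fin n) k ⧸ J) :=
    ((aeval (algebraMap k (MvPowerSeries (Fin n) k ⧸ J) s)).restrictScalars k).comp ψ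
  have hψs : ∀ a, ψs a = (ψ a).eval (algebraMap k (MvPowerSeries (Fin n) k ⧸ J) s) := by
    intro a
    simp [ψs]
  let Ψ : (MvPowerSeries (Fin n) k ⧸ J) ≃ₐ[k] (MvPowerSeries (Fin n) k ⧸ J) := AlgEquiv.ofBijective ψs (by
    convert hbij using 1
    funext a
    exact hψs a)
  have hΨ : ∀ a, Ψ a = (ψ a).eval (algebraMap k (MvPowerSeries (Fin n) k ⧸ J) s) := hψs
  -- the target
  obtain ⟨J', hJ'⟩ : ∃ J' : Ideal (MvPowerSeries (Fin (d + 1)) k), J' = Ideal.span ({F0 d (XN k (d + 1))} ∪ Set.range (fun i : Fin (d + 1) =>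
          (MvPowerSeries.X i : MvPowerSeries (Fin (d + 1)) k) ^ p ^ e)) := ⟨_, rfl⟩
  have hJ'X : Ideal.span (Set.range (fun i : Fin (d + 1) =>
          (MvPowerSeries.X i : MvPowerSeries (Fin (d + 1)) k) ^ p ^ e)) ≤ J' := by
    rw [hJ']; exact Ideal.span_mono Set.subset_union_right
  have hJ'F : F0 d (XN k (d + 1)) ∈ J' := by
    rw [hJ']; exact Ideal.subset_span (Or.inl rfl)
  rw [← hJ']
  let mk' : MvPowerSeries (Fin (d + 1)) k →ₐ[k] (MvPowerSeries (Fin (d + 1)) k ⧸ J') := Ideal.Quotient.mkₐ k J'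
  have hXN : ∀ i, XN k (d + 1) i ∈ Ideal.span (Set.range (MvPowerSeries.X : Fin (d + 1) → MvPowerSeries (Fin (d + 1)) k)) := by
    intro i
    unfold XN extz
    split_ifs
    · exact Ideal.subset_span (Set.mem_range_self _)
    · exact Ideal.zero_mem _
  have hwq : ∀ i, mk' (∑ j : Fin n, Em i j • XN k (d + 1) j) ^ p ^ e = 0 := by
    intro i
    rw [← map_pow]
    refine Ideal.Quotient.eq_zero_iff_mem.mpr (hJ'X (pow_mem_frob p _ ?_ e))
    refine Ideal.sum_mem _ fun j _ => ?_
    rw [MvPowerSeries.smul_eq_C_mul]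
    exact Ideal.mul_mem_left _ _ (hXN j)
  obtain ⟨θS, hθS⟩ := ps_exists_hom (k := k) (fun i => mk' (∑ j : Fin n, Em i j • XN k (d + 1) j)) (fun i => ⟨p ^ e, hwq i⟩)
  let θ : (MvPowerSeries (Fin n) k ⧸ J) →ₐ[k] (MvPowerSeries (Fin (d + 1)) k ⧸ J') := Ideal.Quotient.liftₐ J θS (by
    intro a ha
    have : J ≤ RingHom.ker θS := by
      refine hJle _ fun i => ?_
      rw [RingHom.mem_ker, map_pow, hθS, hwq i]
    exact this ha)
  have hθmk : ∀ a, θ (mk a) = θS a := fun a => rfl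
  have hθz : ∀ i : Fin n, θ (z i) = mk' (XN k (d + 1) i) := by
    intro i
    rw [hz, hθmk, hzS]
    simp only [map_sum, map_smul]
    simp only [Xs, hθS, map_sum, map_smul]
    exact coords_swap Gm Em hGE (fun j : Fin n => mk' (XN k (d + 1) j)) i
  have hθF : θ (F0 d z) = 0 := by
    rw [F0_map θ, F0_congr hd (w' := fun i => mk' (XN k (d + 1) i)), ← F0_map mk']
    · exact Ideal.Quotient.eq_zero_iff_mem.mpr hJ'F
    · intro i hi
      exact hθz ⟨i, by omega⟩
  have hθx : ∀ j, d < j → j < n → θ (z j) = 0 := by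
    intro j hj hjn
    have := hθz ⟨j, hjn⟩
    simp only at this
    rw [this]
    unfold XN extz
    rw [dif_neg (by omega), map_zero]
  have hθsurj : Function.Surjective θ := by
    rw [← AlgHom.range_eq_top, eq_top_iff, ← ps_quot_adjoin J' (fun i => ⟨p ^ e, hJ'X (Ideal.subset_span (Set.mem_range_self i))⟩),
      Algebra.adjoin_le_iff]
    rintro _ ⟨i, rfl⟩
    refine ⟨z i, ?_⟩
    have := hθz ⟨i, by omega⟩
    simp only at this
    change θ (z i) = _
    rw [this]
    unfold XN
    rw [extz_apply]; rfl
  let Θ : (MvPowerSeries (Fin n) k ⧸ J) →ₐ[k] (MvPowerSeries (Fin (d + 1)) k ⧸ J') := θ.comp Ψ.symm.toAlgHom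
  have hΘ : ∀ a, Θ (Ψ a) = θ a := by
    intro a
    change θ (Ψ.symm (Ψ a)) = _
    rw [AlgEquiv.symm_apply_apply]
  have hΘsurj : Function.Surjective Θ := hθsurj.comp Ψ.symm.surjective
  have hΨz : ∀ j, d < j → j < n → Ψ (z j) = (C (z j) + X * (C (fA (j - d)) - C (z j)) : (MvPowerSeries (Fin n) k ⧸ J)[X]).eval
      (algebraMap k (MvPowerSeries (Fin n) k ⧸ J) s) := by
    intro j hj hjn
    have := hψz ⟨j, hjn⟩
    simp only at this
    rw [hΨ, this]
    simp only [u]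
    rw [if_neg (by omega)]
  have hΨF : Ψ (F0 d z) = (F0 d u).eval (algebraMap k (MvPowerSeries (Fin n) k ⧸ J) s) := by
    refine Eq.trans ?_ (F0_eval d _ u).symm
    rw [F0_map Ψ]
    refine F0_congr hd fun i hi => ?_
    have := hψz ⟨i, by omega⟩
    simp only at this
    rw [hΨ, this]
  have hkill : Ideal.span (Set.range fun j => (γ j).eval (algebraMap k (MvPowerSeries (Fin n) k ⧸ J) s)) ≤ RingHom.ker Θ := by
    rw [Ideal.span_le]
    rintro _ ⟨i, rfl⟩
    rw [SetLike.mem_coe, RingHom.mem_ker]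
    simp only [γ]
    split_ifs with hi
    · rw [eval_add, eval_mul, ← hΨF, map_add, map_mul, hΘ, hθF, mul_zero, zero_add, eval_finset_sum, map_sum]
      refine Finset.sum_eq_zero fun j hj => ?_
      rw [Finset.mem_Ioo] at hj
      rw [eval_mul, ← hΨz j hj.1 hj.2, map_mul, hΘ, hθx j hj.1 hj.2, mul_zero]
    · simp only [P, P0, if_neg hi]
      have := hΨz (d + i) (by omega) (by omega)
      rw [Nat.add_sub_cancel_left] at this
      rw [← this, hΘ, hθx _ (by omega) (by omega)]
  have hle1 : Module.finrank k (MvPowerSeries (Fin (d + 1)) k ⧸ J') ≤ Module.finrank k ((MvPowerSeries (Fin n) k ⧸ J) ⧸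
      Ideal.span (Set.range fun j => (γ j).eval (algebraMap k (MvPowerSeries (Fin n) k ⧸ J) s))) := by
    refine LinearMap.finrank_le_finrank_of_surjective (f := (Ideal.Quotient.liftₐ _ Θ (fun a ha => hkill ha)).toLinearMap) ?_
    intro y
    obtain ⟨a, ha⟩ := hΘsurj y
    exact ⟨Ideal.Quotient.mk _ a, ha⟩
  refine hle1.trans (hfin.trans ?_)
  have hfinite : Module.Finite k (MvPowerSeries (Fin n) k ⧸ Ideal.span (Set.range f ∪ Set.range (fun i : Fin n =>
          (MvPowerSeries.X i : MvPowerSeries (Fin n) k) ^ p ^ e))) :=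
    ps_quot_finite _ fun i => ⟨p ^ e, Ideal.subset_span (Or.inr ⟨i, rfl⟩)⟩
  let qq : MvPowerSeries (Fin n) k →ₐ[k] ((MvPowerSeries (Fin n) k ⧸ J) ⧸ Ideal.span (Set.range fun j => (P j).eval 1)) :=
    (Ideal.Quotient.mkₐ k _).comp mk
  refine LinearMap.finrank_le_finrank_of_surjective (f := (Ideal.Quotient.liftₐ _ qq (fun a ha => ?_)).toLinearMap) ?_
  · have : Ideal.span (Set.range f ∪ Set.range (fun i : Fin n =>
          (MvPowerSeries.X i : MvPowerSeries (Fin n) k) ^ p ^ e)) ≤ RingHom.ker qq := by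
      rw [Ideal.span_le]
      rintro _ (⟨i, rfl⟩ | ⟨i, rfl⟩)
      · refine Ideal.Quotient.eq_zero_iff_mem.mpr (Ideal.subset_span ⟨i, ?_⟩)
        simp only [P]
        rw [hfA]
        simp
      · rw [SetLike.mem_coe, RingHom.mem_ker]
        change (Ideal.Quotient.mkₐ k _) (mk _) = 0
        rw [show mk ((MvPowerSeries.X i : MvPowerSeries (Fin n) k) ^ p ^ e) = 0 from Ideal.Quotient.eq_zero_iff_mem.mpr (hXJ i), map_zero]
    exact this ha
  · intro y
    obtain ⟨a, rfl⟩ := Ideal.Quotient.mk_surjective y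
    obtain ⟨b, rfl⟩ := Ideal.Quotient.mk_surjective a
    exact ⟨Ideal.Quotient.mk _ b, rfl⟩

end Part8

section Part9

theorem F0_ne_zero {k : Type*} [Field k] (d : ℕ) : F0 d (XN k (d + 1)) ≠ 0 := by
  intro h
  let I : Ideal (Polynomial k) := Ideal.span {Polynomial.X ^ 4}
  let t : Polynomial k ⧸ I := Ideal.Quotient.mk I Polynomial.X
  have ht4 : t ^ 4 = 0 := by
    rw [← map_pow]; exact Ideal.Quotient.eq_zero_iff_mem.mpr (Ideal.mem_span_singleton_self _)
  have ht3 : t ^ 3 ≠ 0 := by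
    rw [← map_pow]
    intro h3
    have := Ideal.Quotient.eq_zero_iff_mem.mp h3
    rw [Ideal.mem_span_singleton, Polynomial.X_pow_dvd_iff] at this
    have := this 3 (by norm_num)
    simp at this
  obtain ⟨φ, hφ⟩ := ps_exists_hom (k := k) (n := d + 1) (fun i => if (i : ℕ) = 0 then t else 0) (fun i => by
    beta_reduce
    split_ifs
    · exact ⟨4, ht4⟩
    · exact IsNilpotent.zero)
  have h1 : φ (F0 d (XN k (d + 1))) = 0 := by rw [h, map_zero]
  have hX : ∀ i, φ (XN k (d + 1) i) = if i = 0 then t else 0 := by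
    intro i
    unfold XN extz
    split_ifs with h1 h2 h2
    · rw [hφ]; simp [h2]
    · rw [hφ]; simp [h2]
    · omega
    · simp
  rw [F0_map φ] at h1
  unfold F0 Qf at h1
  simp only [hX] at h1
  simp at h1
  exact ht3 h1

theorem F0_mem_sq {k : Type*} [Field k] (d : ℕ) : F0 d (XN k (d + 1)) ∈ (Ideal.span (Set.range
        (MvPowerSeries.X : Fin (d + 1) → MvPowerSeries (Fin (d + 1)) k))) ^ 2 := by
  have hXN : ∀ i, XN k (d + 1) i ∈ Ideal.span (Set.range (MvPowerSeries.X : Fin (d + 1) → MvPowerSeries (Fin (d + 1)) k)) := by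
    intro i
    unfold XN extz
    split_ifs
    · exact Ideal.subset_span (Set.mem_range_self _)
    · exact Ideal.zero_mem _
  unfold F0
  refine Ideal.add_mem _ (Qf_mem _ _ (le_of_eq (sq _).symm) _ _ fun i _ => hXN _) ?_
  exact Ideal.pow_le_pow_right (by norm_num) (Ideal.pow_mem_pow (hXN 0) 3)

theorem limsup_le_liminf_aux (a b : ℕ → ℝ) (C : ℝ) (ha : Monotone a) (hab : ∀ e, a e ≤ b e) (hb : ∀ e, b e ≤ C) :
    Filter.limsup a Filter.atTop ≤ Filter.liminf b Filter.atTop := by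
  have hbdd : BddAbove (Set.range a) := ⟨C, by rintro _ ⟨e, rfl⟩; exact (hab e).trans (hb e)⟩
  rw [(tendsto_atTop_ciSup ha hbdd).limsup_eq]
  refine ciSup_le fun m => ?_
  refine Filter.le_liminf_of_le ?_ ?_
  · exact Filter.IsCoboundedUnder.of_frequently_le (a := C) (Filter.Frequently.of_forall hb)
  · filter_upwards [Filter.eventually_ge_atTop m] with e he
    exact (ha he).trans (hab e)

theorem hk_seq_mono {k : Type*} [Field k] [IsAlgClosed k] (p : ℕ) (hp : p.Prime) [CharP k p] {d : ℕ}
    (F : MvPowerSeries (Fin (d + 1)) k) : Monotone (fun e : ℕ =>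
          (Module.finrank k
            (MvPowerSeries (Fin (d + 1)) k ⧸
              Ideal.span ({F} ∪ Set.range
                (fun i : Fin (d + 1) =>
                  (MvPowerSeries.X i :
                    MvPowerSeries (Fin (d + 1)) k) ^ p ^ e))) : ℝ) /
            (p : ℝ) ^ (d * e)) := by
  have := Fact.mk hp
  have : ExpChar k p := ExpChar.prime hp
  have hp0 : (0 : ℝ) < p := by exact_mod_cast hp.pos
  refine monotone_nat_of_le_succ fun e => ?_
  have h := hk_mono p hp.ne_zero F (p ^ e) (pow_ne_zero _ hp.ne_zero)
  rw [← pow_succ] at h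
  rw [div_le_div_iff₀ (by positivity) (by positivity)]
  have h' := (Nat.cast_le (α := ℝ)).mpr h
  push_cast at h'
  calc _ = ((p : ℝ) ^ d * _) * (p : ℝ) ^ (d * e) := by rw [mul_add, pow_add, mul_one]; ring
    _ ≤ _ := mul_le_mul_of_nonneg_right h' (by positivity)

theorem bound_seq {k : Type*} [Field k] (p : ℕ) (hp : p.Prime) [CharP k p] {n d ℓ : ℕ} (hn : n = d + ℓ)
    (f : Fin ℓ → MvPowerSeries (Fin n) k)
    (hreg : RingTheory.Sequence.IsRegular (MvPowerSeries (Fin n) k) (List.ofFn f)) :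
    ∃ C : ℝ, ∀ e : ℕ, (Module.finrank k
            (MvPowerSeries (Fin n) k ⧸
              Ideal.span (Set.range f ∪ Set.range
                (fun i : Fin n =>
                  (MvPowerSeries.X i : MvPowerSeries (Fin n) k) ^ p ^ e))) : ℝ) / (p : ℝ) ^ (d * e) ≤ C := by
  have := Fact.mk hp
  have hp0 : (0 : ℝ) < p := by exact_mod_cast hp.pos
  obtain ⟨C, hC⟩ := bounded_hk p (by omega : ℓ ≤ n) f hreg
  refine ⟨C, fun e => ?_⟩
  rw [div_le_iff₀ (by positivity)]
  have h := hC e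
  rw [show n - ℓ = d by omega] at h
  exact_mod_cast h

theorem main_aux
    (p : ℕ) (hp : p.Prime) (k : Type*) [Field k] [IsAlgClosed k] [CharP k p]
    (n ℓ d : ℕ) (hℓ : 1 ≤ ℓ) (hd : 2 ≤ d) (hn : n = d + ℓ)
    (f : Fin ℓ → MvPowerSeries (Fin n) k)
    (hf : ∀ i : Fin ℓ, f i ∈ (Ideal.span
      (Set.range (MvPowerSeries.X : Fin n → MvPowerSeries (Fin n) k))) ^ 2)
    (hreg : RingTheory.Sequence.IsRegular (MvPowerSeries (Fin n) k) (List.ofFn f))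
    (hnotA1 : ¬ Nonempty ((MvPowerSeries (Fin n) k ⧸
        (Ideal.span (Set.range f) : Ideal (MvPowerSeries (Fin n) k))) ≃+*
      (MvPowerSeries (Fin (d + 1)) k ⧸
        (Ideal.span {A1ps k d} :
          Ideal (MvPowerSeries (Fin (d + 1)) k))))) :
    ∃ F : MvPowerSeries (Fin (d + 1)) k,
      F ≠ 0 ∧
      F ∈ (Ideal.span (Set.range
        (MvPowerSeries.X : Fin (d + 1) → MvPowerSeries (Fin (d + 1)) k))) ^ 2 ∧
      ¬ Nonempty ((MvPowerSeries (Fin (d + 1)) k ⧸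
          (Ideal.span {F} : Ideal (MvPowerSeries (Fin (d + 1)) k))) ≃+*
        (MvPowerSeries (Fin (d + 1)) k ⧸
          (Ideal.span {A1ps k d} :
            Ideal (MvPowerSeries (Fin (d + 1)) k)))) ∧
      Filter.liminf
        (fun e : ℕ =>
          (Module.finrank k
            (MvPowerSeries (Fin n) k ⧸
              Ideal.span (Set.range f ∪ Set.range
                (fun i : Fin n =>
                  (MvPowerSeries.X i : MvPowerSeries (Fin n) k) ^ p ^ e))) : ℝ) /
            (p : ℝ) ^ (d * e))
        Filter.atTop ≥
      Filter.limsup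
        (fun e : ℕ =>
          (Module.finrank k
            (MvPowerSeries (Fin (d + 1)) k ⧸
              Ideal.span ({F} ∪ Set.range
                (fun i : Fin (d + 1) =>
                  (MvPowerSeries.X i :
                    MvPowerSeries (Fin (d + 1)) k) ^ p ^ e))) : ℝ) /
            (p : ℝ) ^ (d * e))
        Filter.atTop := by
  have := Fact.mk hp
  obtain ⟨C, hC⟩ := bound_seq p hp hn f hreg
  rcases Nat.lt_or_ge ℓ 2 with hℓ2 | hℓ2
  · obtain rfl : ℓ = 1 := by omega
    subst hn
    have hr : Set.range f = {f 0} := by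
      ext x
      simp only [Set.mem_range, Set.mem_singleton_iff]
      constructor
      · rintro ⟨i, rfl⟩; rw [Subsingleton.elim i 0]
      · rintro rfl; exact ⟨0, rfl⟩
    rw [hr] at hnotA1
    refine ⟨f 0, ?_, hf 0, hnotA1, ?_⟩
    · intro h0
      have h1 := hreg.toIsWeaklyRegular
      have h2 : List.ofFn f = [f 0] := by simp
      rw [h2, h0, RingTheory.Sequence.isWeaklyRegular_singleton_iff] at h1
      have h3 : (1 : MvPowerSeries (Fin (d + 1)) k) = 0 := h1 (by simp)
      exact one_ne_zero h3
    · exact limsup_le_liminf_aux _ _ C (hk_seq_mono p hp (f 0)) (fun e => by rw [hr]) hC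
  · refine ⟨F0 d (XN k (d + 1)), F0_ne_zero d, F0_mem_sq d, F0_not_A1 d hd, ?_⟩
    refine limsup_le_liminf_aux _ _ C (hk_seq_mono p hp _) (fun e => ?_) hC
    have h := hk_ge p (by omega : 1 ≤ d) hℓ2 hn f hf e
    gcongr
end Part9

/-- Reduction from complete intersections to hypersurfaces: a singular complete
intersection `R = k[[x_1,…,x_n]]/(f_1,…,f_ℓ)` of dimension `d = n − ℓ ≥ 2` that is not
isomorphic to the `A₁` singularity has Hilbert–Kunz multiplicity at least that of some
singular hypersurface `k[[y_0,…,y_d]]/(F)` of the same dimension which is also not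
isomorphic to the `A₁` singularity. -/
theorem reduction_to_hypersurface
    (p : ℕ) (hp : p.Prime) (k : Type*) [Field k] [IsAlgClosed k] [CharP k p]
    (n ℓ : ℕ) (hn : 1 ≤ n) (hℓ : 1 ≤ ℓ) (hd : 2 ≤ n - ℓ)
    (f : Fin ℓ → MvPowerSeries (Fin n) k)
    (hf : ∀ i : Fin ℓ, f i ∈ (Ideal.span
      (Set.range (MvPowerSeries.X : Fin n → MvPowerSeries (Fin n) k))) ^ 2)
    (hreg : RingTheory.Sequence.IsRegular (MvPowerSeries (Fin n) k) (List.ofFn f))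
    (hnotA1 : ¬ Nonempty ((MvPowerSeries (Fin n) k ⧸
        (Ideal.span (Set.range f) : Ideal (MvPowerSeries (Fin n) k))) ≃+*
      (MvPowerSeries (Fin (n - ℓ + 1)) k ⧸
        (Ideal.span {A1ps k (n - ℓ)} :
          Ideal (MvPowerSeries (Fin (n - ℓ + 1)) k))))) :
    ∃ F : MvPowerSeries (Fin (n - ℓ + 1)) k,
      F ≠ 0 ∧
      F ∈ (Ideal.span (Set.range
        (MvPowerSeries.X : Fin (n - ℓ + 1) → MvPowerSeries (Fin (n - ℓ + 1)) k))) ^ 2 ∧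
      ¬ Nonempty ((MvPowerSeries (Fin (n - ℓ + 1)) k ⧸
          (Ideal.span {F} : Ideal (MvPowerSeries (Fin (n - ℓ + 1)) k))) ≃+*
        (MvPowerSeries (Fin (n - ℓ + 1)) k ⧸
          (Ideal.span {A1ps k (n - ℓ)} :
            Ideal (MvPowerSeries (Fin (n - ℓ + 1)) k)))) ∧
      Filter.liminf
        (fun e : ℕ =>
          (Module.finrank k
            (MvPowerSeries (Fin n) k ⧸
              Ideal.span (Set.range f ∪ Set.range
                (fun i : Fin n =>
                  (MvPowerSeries.X i : MvPowerSeries (Fin n) k) ^ p ^ e))) : ℝ) /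
            (p : ℝ) ^ ((n - ℓ) * e))
        Filter.atTop ≥
      Filter.limsup
        (fun e : ℕ =>
          (Module.finrank k
            (MvPowerSeries (Fin (n - ℓ + 1)) k ⧸
              Ideal.span ({F} ∪ Set.range
                (fun i : Fin (n - ℓ + 1) =>
                  (MvPowerSeries.X i :
                    MvPowerSeries (Fin (n - ℓ + 1)) k) ^ p ^ e))) : ℝ) /
            (p : ℝ) ^ ((n - ℓ) * e))
        Filter.atTop := 
  main_aux p hp k n ℓ (n - ℓ) hℓ hd (by omega) f hf hreg hnotA1
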